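/- Multiplicity of the first non-affine root of E11: let β = (1,2,3,4,5,6,7,8,5,2,4) ∈ ℕ^{11} in the coordinates of A(E11). Then βᵀ A(E11) β = −2 and the root space of β in the Kac–Moody algebra g(A(E11)), namely the simultaneous eigenspace {x : [h_i,x] = (∑_j A(E11)_{ij} β_j) x for all i}, has dimension 46, i.e. mult(β) = 46. -/

import Mathlib

noncomputable section

open CartanMatrix

/-- A generalized Cartan matrix: `A i i = 2`, off-diagonal entries are non-positive, and
`A i j = 0 ↔ A j i = 0`. -/
def IsGCM {B : Type*} (A : Matrix B B ℤ) : Prop :=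
  (∀ i, A i i = 2) ∧ (∀ i j, i ≠ j → A i j ≤ 0) ∧ (∀ i j, A i j = 0 ↔ A j i = 0)

/-- The images in the Kac–Moody algebra `Matrix.ToLieAlgebra ℚ A` of the generators of the
free Lie algebra. -/
def KMgen {B : Type*} [DecidableEq B] (A : Matrix B B ℤ) (x : Generators B) :
    Matrix.ToLieAlgebra ℚ A :=
  LieSubmodule.Quotient.mk (N := Relations.toIdeal ℚ A) (FreeLieAlgebra.of ℚ x)

/-- The Cartan generator `h i`. -/
def gH {B : Type*} [DecidableEq B] (A : Matrix B B ℤ) (i : B) : Matrix.ToLieAlgebra ℚ A :=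
  KMgen A (Generators.H i)

/-- The raising generator `e i`. -/
def gE {B : Type*} [DecidableEq B] (A : Matrix B B ℤ) (i : B) : Matrix.ToLieAlgebra ℚ A :=
  KMgen A (Generators.E i)

/-- The lowering generator `f i`. -/
def gF {B : Type*} [DecidableEq B] (A : Matrix B B ℤ) (i : B) : Matrix.ToLieAlgebra ℚ A :=
  KMgen A (Generators.F i)

/-- The root space of `g(A)` attached to `n : B → ℤ`: the simultaneous eigenspace of the
adjoint action of the Cartan generators `h i`, with eigenvalues `∑ j, A i j * n j`. -/
def rootSpace {B : Type*} [Fintype B] [DecidableEq B] (A : Matrix B B ℤ) (n : B → ℤ) :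
    Submodule ℚ (Matrix.ToLieAlgebra ℚ A) :=
  ⨅ i, Module.End.eigenspace
    (LieAlgebra.ad ℚ (Matrix.ToLieAlgebra ℚ A) (gH A i)) ((∑ j, A i j * n j : ℤ) : ℚ)

/-- The multiplicity of `n` in `g(A)`: the dimension of the root space. -/
def rootMult {B : Type*} [Fintype B] [DecidableEq B] (A : Matrix B B ℤ) (n : B → ℤ) : ℕ :=
  Module.finrank ℚ (rootSpace A n)

/-- The Cartan matrix of `E11` (node 1 ↦ index `0` is the very extended node; indices `0`–`9`
form a chain and index `10` is attached to index `7`). -/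
def E11M : Matrix (Fin 11) (Fin 11) ℤ := fun i j =>
  if i = j then 2
  else if (i.val + 1 = j.val ∧ j.val ≤ 9) ∨ (j.val + 1 = i.val ∧ i.val ≤ 9) ∨
          (i.val = 7 ∧ j.val = 10) ∨ (i.val = 10 ∧ j.val = 7) then -1
  else 0

/-!
Deleting the node `9` of `E11` leaves `D10`, and `β` has level two for this node. The vectors of
level one form the half-spin representation of `D10` generated by `e 9`; they are indexed by the
sets `w` of occupied fermionic modes, all with weights in `{-1, 0, 1}`, so the root space of `β` is
spanned by the brackets `⁅s w, s wᶜ⁆`. Take the Walsh transform of these brackets over `w`. The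
component at a set `I` of modes vanishes for `I.card` odd, because the bracket is skew, and only
depends on `I` up to complement, because `w` is even. The Serre relation at the node `9` says that
`⁅s ∅, s w⁆ = 0` for `w.card = 2`: the pairing of spinors kills a product of eight annihilators,
hence the `D10`-module generated by it, which contains the products of four chirality operators.
So the components with `I.card = 4` vanish too, which leaves the `1 + 45` sets with
`I.card = 0` or `I.card = 2`.

For the lower bound, the positive part of `E11` acts on `ℚ × F × P*`, where `F` is the Fock space
and `P` is the space of operators of degree at most four in the creators and the annihilators: the
spinor `s w` maps `1` to the state `w`, and the state `v` to the form `c ↦ ± (c v) wᶜ` on `P`. The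
filtration by degree makes the Serre relations hold, and the products of zero or two chirality
operators, which lie in `P`, separate the `46` Walsh components. Only the Serre relations among the
`e i` have to be checked, because they present the positive part: the module of words in the `e i`
modulo the Serre elements carries an action of the whole Kac–Moody algebra.
-/

section Chevalley

variable {B L : Type*} [LieRing L] [LieAlgebra ℚ L]

/-- The Chevalley relations for the matrix `A`, without the Serre relations. -/
structure IsChevalleySystem [DecidableEq B] (A : Matrix B B ℤ) (h e f : B → L) : Prop where
  lie_h_h : ∀ i j, ⁅h i, h j⁆ = 0
  lie_e_f : ∀ i j, ⁅e i, f j⁆ = if i = j then h i else 0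
  lie_h_e : ∀ i j, ⁅h i, e j⁆ = (A i j : ℚ) • e j
  lie_h_f : ∀ i j, ⁅h i, f j⁆ = -((A i j : ℚ) • f j)

/-- The Serre element `(ad e_i)^(-A i j) [e_i, e_j]`, in the normalisation of
`CartanMatrix.Relations.adE`. -/
def serreElement (A : Matrix B B ℤ) (e : B → L) (i j : B) : L :=
  (LieAlgebra.ad ℚ L (e i) ^ (-A i j).toNat) ⁅e i, e j⁆

theorem serreElement_self {A : Matrix B B ℤ} (hA : ∀ i, A i i = 2) (e : B → L) (i : B) :
    serreElement A e i i = 0 := by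
  simp [serreElement, hA]

theorem serreElement_eq_zero_of_lie_eq_zero {A : Matrix B B ℤ} {e : B → L} {i j : B}
    (h : ⁅e i, e j⁆ = 0) : serreElement A e i j = 0 := by
  rw [serreElement, h, map_zero]

theorem serreElement_of_eq_neg_one {A : Matrix B B ℤ} {i j : B} (h : A i j = -1) (e : B → L) :
    serreElement A e i j = ⁅e i, ⁅e i, e j⁆⁆ := by
  simp [serreElement, h]

theorem serreElement_eq_pow (A : Matrix B B ℤ) (e : B → L) (i j : B) :
    serreElement A e i j = (LieAlgebra.ad ℚ L (e i) ^ ((-A i j).toNat + 1)) (e j) := by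
  rw [pow_succ, Module.End.mul_apply, LieAlgebra.ad_apply, serreElement]

theorem map_serreElement {L' : Type*} [LieRing L'] [LieAlgebra ℚ L'] (φ : L →ₗ⁅ℚ⁆ L')
    (A : Matrix B B ℤ) (e : B → L) (i j : B) :
    φ (serreElement A e i j) = serreElement A (φ ∘ e) i j := by
  have map_pow : ∀ n x, φ ((LieAlgebra.ad ℚ L (e i) ^ n) x) =
      (LieAlgebra.ad ℚ L' (φ (e i)) ^ n) (φ x) := by
    intro n
    induction n with
    | zero => simp
    | succ n ih => intro x; simp [pow_succ, ih]
  simp [serreElement, map_pow]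

theorem lie_pow_ad_apply {x y z : L} {a b : ℚ} (hy : ⁅x, y⁆ = a • y) (hz : ⁅x, z⁆ = b • z) (n : ℕ) :
    ⁅x, (LieAlgebra.ad ℚ L y ^ n) z⁆ = (n * a + b) • (LieAlgebra.ad ℚ L y ^ n) z := by
  induction n with
  | zero => simp [hz]
  | succ n ih =>
    rw [pow_succ', Module.End.mul_apply, LieAlgebra.ad_apply, leibniz_lie, hy, ih, smul_lie,
      lie_smul, ← add_smul]
    congr 1
    push_cast
    ring

namespace IsChevalleySystem

variable [DecidableEq B] {A : Matrix B B ℤ} {h e f : B → L}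

protected theorem symm (H : IsChevalleySystem A h e f) : IsChevalleySystem A (-h) f e where
  lie_h_h i j := by simp [H.lie_h_h]
  lie_e_f i j := by
    rw [← lie_skew, H.lie_e_f]
    split_ifs with hij hji hji <;> simp_all
  lie_h_e i j := by simp [H.lie_h_f]
  lie_h_f i j := by simp [H.lie_h_e]

theorem lie_f_pow_ad_e (H : IsChevalleySystem A h e f) (hA : ∀ i, A i i = 2) {i j : B}
    (hij : i ≠ j) (n : ℕ) :
    ⁅f i, (LieAlgebra.ad ℚ L (e i) ^ (n + 1)) (e j)⁆ =
      -(((n + 1) * (n + A i j) : ℚ) • (LieAlgebra.ad ℚ L (e i) ^ n) (e j)) := by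
  have lie_f_e : ⁅f i, e i⁆ = -h i := by rw [← lie_skew, H.lie_e_f, if_pos rfl]
  induction n with
  | zero =>
    have : ⁅f i, e j⁆ = 0 := by rw [← lie_skew, H.lie_e_f, if_neg hij.symm, neg_zero]
    simp [leibniz_lie (f i), lie_f_e, this, H.lie_h_e]
  | succ n ih =>
    rw [pow_succ', Module.End.mul_apply, LieAlgebra.ad_apply, leibniz_lie, lie_f_e, neg_lie,
      lie_pow_ad_apply (H.lie_h_e i i) (H.lie_h_e i j), ih, lie_neg, lie_smul,
      ← LieAlgebra.ad_apply ℚ L (e i), ← Module.End.mul_apply, ← pow_succ', ← neg_add,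
      ← add_smul, hA]
    congr 2
    push_cast
    ring

theorem lie_f_serreElement (H : IsChevalleySystem A h e f) (hA : IsGCM A) (k i j : B) :
    ⁅f k, serreElement A e i j⁆ = 0 := by
  obtain ⟨hdiag, hneg, hzero⟩ := hA
  rcases eq_or_ne i j with rfl | hij
  · rw [serreElement_self hdiag, lie_zero]
  have hle : A i j ≤ 0 := hneg i j hij
  have hn : ((-A i j).toNat : ℚ) = -A i j := by
    exact_mod_cast Int.toNat_of_nonneg (by omega : 0 ≤ -A i j)
  rw [serreElement_eq_pow]
  rcases eq_or_ne k i with rfl | hki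
  · rw [H.lie_f_pow_ad_e hdiag hij, hn]
    simp
  have hcomm : Commute (LieAlgebra.ad ℚ L (f k)) (LieAlgebra.ad ℚ L (e i)) := by
    have hfe : ⁅f k, e i⁆ = 0 := by rw [← lie_skew, H.lie_e_f, if_neg hki.symm, neg_zero]
    ext x
    simp [leibniz_lie (f k) (e i) x, hfe]
  have hmove := LinearMap.congr_fun (hcomm.pow_right ((-A i j).toNat + 1)).eq (e j)
  simp only [Module.End.mul_apply, LieAlgebra.ad_apply] at hmove
  rw [hmove, ← lie_skew, H.lie_e_f]
  split_ifs with hjk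
  · subst hjk
    have hstep : ⁅e i, h j⁆ = -((A j i : ℚ) • e i) := by rw [← lie_skew, H.lie_h_e]
    rw [pow_succ, Module.End.mul_apply, map_neg, LieAlgebra.ad_apply, hstep, neg_neg]
    rcases Nat.eq_zero_or_pos (-A i j).toNat with h0 | hpos
    · have : A j i = 0 := (hzero i j).1 (by omega)
      simp [this]
    · obtain ⟨m, hm⟩ := Nat.exists_eq_succ_of_ne_zero hpos.ne'
      rw [hm, pow_succ, Module.End.mul_apply, LieAlgebra.ad_apply, lie_smul, lie_self, smul_zero,
        map_zero]
  · simp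

end IsChevalleySystem

end Chevalley

section Generation

/-- The Lie subalgebra of elements whose action on `M` preserves the submodule `N`. -/
def lieStabilizer {R M : Type*} (L : Type*) [CommRing R] [LieRing L] [LieAlgebra R L]
    [AddCommGroup M] [Module R M] [LieRingModule L M] [LieModule R L M] (N : Submodule R M) :
    LieSubalgebra R L where
  carrier := {x | ∀ y ∈ N, ⁅x, y⁆ ∈ N}
  add_mem' ha hb y hy := by rw [add_lie]; exact N.add_mem (ha y hy) (hb y hy)
  zero_mem' y _ := by rw [zero_lie]; exact N.zero_mem
  smul_mem' r a ha y hy := by rw [smul_lie]; exact N.smul_mem _ (ha y hy)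
  lie_mem' ha hb y hy := by
    rw [lie_lie]; exact N.sub_mem (ha _ (hb y hy)) (hb _ (ha y hy))

theorem mem_lieStabilizer {R L M : Type*} [CommRing R] [LieRing L] [LieAlgebra R L]
    [AddCommGroup M] [Module R M] [LieRingModule L M] [LieModule R L M] {N : Submodule R M}
    {x : L} : x ∈ lieStabilizer L N ↔ ∀ y ∈ N, ⁅x, y⁆ ∈ N := Iff.rfl

theorem freeLieAlgebra_lieSubalgebra_eq_top {R X : Type*} [CommRing R]
    (S : LieSubalgebra R (FreeLieAlgebra R X)) (h : ∀ x, FreeLieAlgebra.of R x ∈ S) : S = ⊤ := by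
  have hid : S.incl.comp (FreeLieAlgebra.lift R fun x => (⟨FreeLieAlgebra.of R x, h x⟩ : S)) =
      LieHom.id := by
    ext x; simp
  refine eq_top_iff.2 fun y _ => ?_
  rw [← LieHom.id_apply (R := R) y, ← hid]
  exact Subtype.property _

variable {B : Type*} [DecidableEq B] (A : Matrix B B ℤ)

/-- The defining projection from the free Lie algebra on the Chevalley generators. -/
def toKacMoody : FreeLieAlgebra ℚ (Generators B) →ₗ⁅ℚ⁆ Matrix.ToLieAlgebra ℚ A :=
  { LieSubmodule.Quotient.mk' (Relations.toIdeal ℚ A) with map_lie' := rfl }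

theorem toKacMoody_of (x : Generators B) :
    toKacMoody A (FreeLieAlgebra.of ℚ x) = KMgen A x := rfl

theorem toKacMoody_surjective : Function.Surjective (toKacMoody A) :=
  LieSubmodule.Quotient.surjective_mk' (Relations.toIdeal ℚ A)

theorem toKacMoody_eq_zero_iff {x : FreeLieAlgebra ℚ (Generators B)} :
    toKacMoody A x = 0 ↔ x ∈ Relations.toIdeal ℚ A :=
  LieSubmodule.Quotient.mk_eq_zero _

theorem toKacMoody_eq_zero_of_mem_toSet {x : FreeLieAlgebra ℚ (Generators B)}
    (hx : x ∈ Relations.toSet ℚ A) : toKacMoody A x = 0 :=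
  (toKacMoody_eq_zero_iff A).2 (LieSubmodule.subset_lieSpan hx)

theorem isChevalleySystem_generators : IsChevalleySystem A (gH A) (gE A) (gF A) where
  lie_h_h i j := by
    have := toKacMoody_eq_zero_of_mem_toSet A (x := Relations.HH ℚ (i, j))
      (by simp [Relations.toSet])
    simpa [Relations.HH, toKacMoody_of, gH] using this
  lie_e_f i j := by
    have := toKacMoody_eq_zero_of_mem_toSet A (x := Relations.EF ℚ (i, j))
      (by simp [Relations.toSet])
    rcases eq_or_ne i j with rfl | hij
    · simpa [Relations.EF, toKacMoody_of, sub_eq_zero, gE, gF, gH] using this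
    · simpa [Relations.EF, toKacMoody_of, hij, gE, gF] using this
  lie_h_e i j := by
    have := toKacMoody_eq_zero_of_mem_toSet A (x := Relations.HE ℚ A (i, j))
      (by simp [Relations.toSet])
    simpa [Relations.HE, toKacMoody_of, sub_eq_zero, Int.cast_smul_eq_zsmul, gE, gH] using this
  lie_h_f i j := by
    have := toKacMoody_eq_zero_of_mem_toSet A (x := Relations.HF ℚ A (i, j))
      (by simp [Relations.toSet])
    simp only [Relations.HF, Function.uncurry_apply_pair, Function.comp_apply, map_add,
      LieHom.map_lie, toKacMoody_of, map_zsmul] at this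
    rw [Int.cast_smul_eq_zsmul]
    exact eq_neg_of_add_eq_zero_left this

theorem serreElement_gE (i j : B) : serreElement A (gE A) i j = 0 := by
  have h : toKacMoody A (serreElement A (fun k => FreeLieAlgebra.of ℚ (Generators.E k)) i j) = 0 :=
    toKacMoody_eq_zero_of_mem_toSet A (by simp [Relations.toSet, Relations.adE, serreElement])
  rw [map_serreElement] at h
  exact h

theorem lieSubalgebra_eq_top_of_KMgen_mem (S : LieSubalgebra ℚ (Matrix.ToLieAlgebra ℚ A))
    (h : ∀ x, KMgen A x ∈ S) : S = ⊤ := by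
  refine eq_top_iff.2 fun y _ => ?_
  obtain ⟨x, rfl⟩ := toKacMoody_surjective A y
  have hx : x ∈ S.comap (toKacMoody A) := by
    rw [freeLieAlgebra_lieSubalgebra_eq_top (S.comap (toKacMoody A)) h]
    trivial
  exact hx

theorem submodule_eq_top_of_KMgen_mem (Y : Submodule ℚ (Matrix.ToLieAlgebra ℚ A))
    (hmem : ∀ x, KMgen A x ∈ Y)
    (hlie : ∀ x, KMgen A x ∈ lieStabilizer (Matrix.ToLieAlgebra ℚ A) Y) : Y = ⊤ := by
  have hstab : lieStabilizer (Matrix.ToLieAlgebra ℚ A) Y = ⊤ :=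
    lieSubalgebra_eq_top_of_KMgen_mem A _ hlie
  let S : LieSubalgebra ℚ (Matrix.ToLieAlgebra ℚ A) :=
    { Y with lie_mem' := fun {a b} _ hb => mem_lieStabilizer.1 (hstab ▸ trivial : a ∈ _) b hb }
  have hS : S = ⊤ := lieSubalgebra_eq_top_of_KMgen_mem A S hmem
  refine eq_top_iff.2 fun y _ => ?_
  exact (hS ▸ trivial : y ∈ S)

end Generation

section JointEigenspaces

variable {ι K M : Type*} [Field K] [AddCommGroup M] [Module K M]

theorem mem_span_inter_iInf_eigenspace {f : ι → Module.End K M}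
    (hcomm : ∀ i j, Commute (f i) (f j)) {S : Set M}
    (hS : ∀ s ∈ S, ∃ χ : ι → K, s ∈ ⨅ i, (f i).eigenspace (χ i)) {χ : ι → K} {x : M}
    (hx : x ∈ Submodule.span K S) (hχ : x ∈ ⨅ i, (f i).eigenspace (χ i)) :
    x ∈ Submodule.span K (S ∩ (⨅ i, (f i).eigenspace (χ i) : Submodule K M)) := by
  let V : (ι → K) → Submodule K M := fun χ => ⨅ i, (f i).eigenspace (χ i)
  have hindep : iSupIndep V :=
    (Module.End.independent_iInf_maxGenEigenspace_of_forall_mapsTo f fun i j φ =>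
      Module.End.mapsTo_maxGenEigenspace_of_comm (hcomm j i) φ).mono fun χ =>
        iInf_mono fun i => ((f i).genEigenspace (χ i)).monotone le_top
  set P := Submodule.span K (S ∩ V χ)
  set Q := ⨆ χ', ⨆ (_ : χ' ≠ χ), V χ'
  have hP : P ≤ V χ := Submodule.span_le.2 Set.inter_subset_right
  have hPQ : Submodule.span K S ≤ P ⊔ Q := by
    refine Submodule.span_le.2 fun s hs => ?_
    obtain ⟨χ', hχ'⟩ := hS s hs
    rcases eq_or_ne χ' χ with rfl | hne
    · exact Submodule.mem_sup_left (Submodule.subset_span ⟨hs, hχ'⟩)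
    · exact Submodule.mem_sup_right ((le_iSup₂_of_le χ' hne le_rfl : V χ' ≤ Q) hχ')
  obtain ⟨p, hp, q, hq, rfl⟩ := Submodule.mem_sup.1 (hPQ hx)
  have hqV : q ∈ V χ := by simpa using (V χ).sub_mem hχ (hP hp)
  rwa [Submodule.disjoint_def.1 (hindep χ) q hqV hq, add_zero]

end JointEigenspaces

section LieWords

variable {B L : Type*} [LieRing L]

/-- The right-normed bracket `⁅e i₁, ⁅e i₂, …, e iₖ⁆⁆` of a word, with value `0` on the empty
word. -/
def lieWord (e : B → L) : List B → L
  | [] => 0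
  | [i] => e i
  | i :: j :: l => ⁅e i, lieWord e (j :: l)⁆

theorem lieWord_cons (e : B → L) (i : B) {l : List B} (hl : l ≠ []) :
    lieWord e (i :: l) = ⁅e i, lieWord e l⁆ := by
  obtain ⟨j, l, rfl⟩ := List.exists_cons_of_ne_nil hl
  rfl

variable [LieAlgebra ℚ L]

theorem lie_mem_span_lieWord (e : B → L) (i : B) {x : L}
    (hx : x ∈ Submodule.span ℚ (Set.range (lieWord e))) :
    ⁅e i, x⁆ ∈ Submodule.span ℚ (Set.range (lieWord e)) := by
  refine (Submodule.map_span_le (LieAlgebra.ad ℚ L (e i)) _ _).2 ?_ (Submodule.mem_map_of_mem hx)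
  rintro _ ⟨l, rfl⟩
  rcases eq_or_ne l [] with rfl | hl
  · simp [lieWord]
  · exact Submodule.subset_span ⟨i :: l, lieWord_cons e i hl⟩

namespace IsChevalleySystem

variable [DecidableEq B] {A : Matrix B B ℤ} {h e f : B → L}

theorem lie_h_lieWord (H : IsChevalleySystem A h e f) (k : B) (l : List B) :
    ∃ c : ℚ, ⁅h k, lieWord e l⁆ = c • lieWord e l := by
  induction l with
  | nil => exact ⟨0, by simp [lieWord]⟩
  | cons i l ih =>
    rcases eq_or_ne l [] with rfl | hl
    · exact ⟨_, H.lie_h_e k i⟩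
    · obtain ⟨c, hc⟩ := ih
      refine ⟨A k i + c, ?_⟩
      rw [lieWord_cons e i hl, leibniz_lie, H.lie_h_e, hc, smul_lie, lie_smul, add_smul]

theorem lie_h_mem_span_lieWord (H : IsChevalleySystem A h e f) (k : B) {x : L}
    (hx : x ∈ Submodule.span ℚ (Set.range (lieWord e))) :
    ⁅h k, x⁆ ∈ Submodule.span ℚ (Set.range (lieWord e)) := by
  refine (Submodule.map_span_le (LieAlgebra.ad ℚ L (h k)) _ _).2 ?_ (Submodule.mem_map_of_mem hx)
  rintro _ ⟨l, rfl⟩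
  obtain ⟨c, hc⟩ := H.lie_h_lieWord k l
  rw [LieAlgebra.ad_apply, hc]
  exact Submodule.smul_mem _ c (Submodule.subset_span ⟨l, rfl⟩)

theorem lie_e_mem_span_lieWord_of_mem_span_h (H : IsChevalleySystem A h e f) (k : B) {x : L}
    (hx : x ∈ Submodule.span ℚ (Set.range h)) :
    ⁅e k, x⁆ ∈ Submodule.span ℚ (Set.range (lieWord e)) := by
  refine (Submodule.map_span_le (LieAlgebra.ad ℚ L (e k)) _ _).2 ?_ (Submodule.mem_map_of_mem hx)
  rintro _ ⟨i, rfl⟩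
  rw [LieAlgebra.ad_apply, ← lie_skew, H.lie_h_e]
  exact Submodule.neg_mem _ (Submodule.smul_mem _ _ (Submodule.subset_span ⟨[k], rfl⟩))

theorem lie_f_lieWord_mem (H : IsChevalleySystem A h e f) (k : B) (l : List B) :
    ⁅f k, lieWord e l⁆ ∈
      Submodule.span ℚ (Set.range (lieWord e)) ⊔ Submodule.span ℚ (Set.range h) := by
  have lie_f_e : ∀ i, ⁅f k, e i⁆ = if i = k then -h i else 0 := fun i => by
    rw [← lie_skew, H.lie_e_f]
    split_ifs <;> simp
  induction l with
  | nil => simp [lieWord]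
  | cons i l ih =>
    rcases eq_or_ne l [] with rfl | hl
    · rw [lieWord, lie_f_e]
      split_ifs
      · exact Submodule.mem_sup_right (Submodule.neg_mem _ (Submodule.subset_span ⟨i, rfl⟩))
      · exact Submodule.zero_mem _
    · rw [lieWord_cons e i hl, leibniz_lie, lie_f_e]
      refine Submodule.mem_sup_left (Submodule.add_mem _ ?_ ?_)
      · split_ifs
        · rw [neg_lie]
          exact Submodule.neg_mem _ (H.lie_h_mem_span_lieWord i (Submodule.subset_span ⟨l, rfl⟩))
        · simp
      · obtain ⟨x, hx, y, hy, hxy⟩ := Submodule.mem_sup.1 ih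
        rw [← hxy, lie_add]
        exact Submodule.add_mem _ (lie_mem_span_lieWord e i hx)
          (H.lie_e_mem_span_lieWord_of_mem_span_h i hy)

end IsChevalleySystem

/-- The span of the `e`-words, the `h i` and the `f`-words: the sum of the three parts of a
triangular decomposition. -/
def triangularSpan (h e f : B → L) : Submodule ℚ L :=
  Submodule.span ℚ (Set.range (lieWord e)) ⊔ Submodule.span ℚ (Set.range h) ⊔
    Submodule.span ℚ (Set.range (lieWord f))

theorem triangularSpan_symm (h e f : B → L) :
    triangularSpan (-h) f e = triangularSpan h e f := by
  have hneg : Set.range (-h) = -Set.range h := by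
    ext x
    simp [neg_eq_iff_eq_neg]
  rw [triangularSpan, triangularSpan, hneg, Submodule.span_neg, sup_comm, ← sup_assoc,
    sup_right_comm]

namespace IsChevalleySystem

variable [DecidableEq B] {A : Matrix B B ℤ} {h e f : B → L}

theorem e_mem_lieStabilizer (H : IsChevalleySystem A h e f) (k : B) :
    e k ∈ lieStabilizer L (triangularSpan h e f) := by
  suffices triangularSpan h e f ≤
      (triangularSpan h e f).comap (LieAlgebra.ad ℚ L (e k) : L →ₗ[ℚ] L) from fun y hy => this hy
  refine sup_le (sup_le (fun x hx => ?_) (fun x hx => ?_)) (Submodule.span_le.2 ?_)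
  · exact Submodule.mem_sup_left (Submodule.mem_sup_left (lie_mem_span_lieWord e k hx))
  · exact Submodule.mem_sup_left (Submodule.mem_sup_left
      (H.lie_e_mem_span_lieWord_of_mem_span_h k hx))
  · rintro _ ⟨l, rfl⟩
    have hword := H.symm.lie_f_lieWord_mem k l
    rw [← triangularSpan_symm]
    exact Submodule.mem_sup_left hword

theorem f_mem_lieStabilizer (H : IsChevalleySystem A h e f) (k : B) :
    f k ∈ lieStabilizer L (triangularSpan h e f) := by
  rw [← triangularSpan_symm]
  exact H.symm.e_mem_lieStabilizer k

end IsChevalleySystem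

end LieWords

theorem triangularSpan_generators_eq_top {B : Type*} [DecidableEq B] (A : Matrix B B ℤ) :
    triangularSpan (gH A) (gE A) (gF A) = ⊤ := by
  have H := isChevalleySystem_generators A
  have hH : ∀ i, gH A i ∈ lieStabilizer _ (triangularSpan (gH A) (gE A) (gF A)) := fun i => by
    have := LieSubalgebra.lie_mem _ (H.e_mem_lieStabilizer i) (H.f_mem_lieStabilizer i)
    rwa [H.lie_e_f, if_pos rfl] at this
  refine submodule_eq_top_of_KMgen_mem A _ ?_ ?_
  · rintro (i | i | i)
    · exact Submodule.mem_sup_left (Submodule.mem_sup_right (Submodule.subset_span ⟨i, rfl⟩))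
    · exact Submodule.mem_sup_left (Submodule.mem_sup_left (Submodule.subset_span ⟨[i], rfl⟩))
    · exact Submodule.mem_sup_right (Submodule.subset_span ⟨[i], rfl⟩)
  · rintro (i | i | i)
    exacts [hH i, H.e_mem_lieStabilizer i, H.f_mem_lieStabilizer i]

section RootSpaces

variable {B : Type*} [Fintype B] [DecidableEq B] {A : Matrix B B ℤ}

theorem mem_rootSpace {n : B → ℤ} {x : Matrix.ToLieAlgebra ℚ A} :
    x ∈ rootSpace A n ↔ ∀ i, ⁅gH A i, x⁆ = ((A.mulVec n i : ℤ) : ℚ) • x := by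
  simp [rootSpace, Matrix.mulVec, dotProduct]

theorem lie_mem_rootSpace_add {m n : B → ℤ} {x y : Matrix.ToLieAlgebra ℚ A}
    (hx : x ∈ rootSpace A m) (hy : y ∈ rootSpace A n) : ⁅x, y⁆ ∈ rootSpace A (m + n) := by
  rw [mem_rootSpace] at *
  intro i
  rw [leibniz_lie, hx, hy, smul_lie, lie_smul, ← add_smul, Matrix.mulVec_add]
  push_cast [Pi.add_apply]
  rfl

theorem gH_mem_rootSpace (i : B) : gH A i ∈ rootSpace A 0 :=
  mem_rootSpace.2 fun k => by simp [(isChevalleySystem_generators A).lie_h_h]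

theorem gE_mem_rootSpace (i : B) : gE A i ∈ rootSpace A (Pi.single i 1) :=
  mem_rootSpace.2 fun k => by simp [(isChevalleySystem_generators A).lie_h_e]

theorem gF_mem_rootSpace (i : B) : gF A i ∈ rootSpace A (-Pi.single i 1) :=
  mem_rootSpace.2 fun k => by simp [(isChevalleySystem_generators A).lie_h_f, Matrix.mulVec_neg]

theorem lieWord_mem_rootSpace {e : B → Matrix.ToLieAlgebra ℚ A} {c : ℤ}
    (he : ∀ i, e i ∈ rootSpace A (c • Pi.single i 1)) (l : List B) :
    lieWord e l ∈ rootSpace A (c • fun i => (l.count i : ℤ)) := by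
  induction l with
  | nil => exact Submodule.zero_mem _
  | cons i l ih =>
    have hcount : (fun k => (((i :: l).count k : ℕ) : ℤ)) =
        Pi.single i 1 + fun k => (l.count k : ℤ) := by
      ext k
      rcases eq_or_ne i k with rfl | hik
      · simp [add_comm]
      · simp [hik, hik.symm]
    rcases eq_or_ne l [] with rfl | hl
    · have hnil : (fun k => (([] : List B).count k : ℤ)) = 0 := by ext; simp
      rw [hcount, hnil, add_zero]
      exact he i
    · rw [lieWord_cons e i hl, hcount, smul_add]
      exact lie_mem_rootSpace_add (he i) ih

theorem eq_of_mem_rootSpace (hA : Function.Injective A.mulVec) {m n : B → ℤ}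
    {x : Matrix.ToLieAlgebra ℚ A} (hx : x ≠ 0) (hm : x ∈ rootSpace A m)
    (hn : x ∈ rootSpace A n) : m = n := by
  refine hA (funext fun i => ?_)
  have := (mem_rootSpace.1 hm i).symm.trans (mem_rootSpace.1 hn i)
  exact_mod_cast smul_left_injective ℚ hx this

theorem mem_span_inter_rootSpace {S : Set (Matrix.ToLieAlgebra ℚ A)}
    (hS : ∀ s ∈ S, ∃ m, s ∈ rootSpace A m) {n : B → ℤ} {x : Matrix.ToLieAlgebra ℚ A}
    (hx : x ∈ Submodule.span ℚ S) (hn : x ∈ rootSpace A n) :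
    x ∈ Submodule.span ℚ (S ∩ rootSpace A n) := by
  refine mem_span_inter_iInf_eigenspace (f := fun i => LieAlgebra.ad ℚ _ (gH A i))
    (fun i j => ?_) (fun s hs => ?_) hx hn
  swap
  · obtain ⟨m, hm⟩ := hS s hs
    exact ⟨_, hm⟩
  ext y
  simp [leibniz_lie (gH A i) (gH A j), (isChevalleySystem_generators A).lie_h_h]

theorem rootSpace_le_span_lieWord (hA : Function.Injective A.mulVec) {n : B → ℤ}
    (hn : ∃ i, 0 < n i) :
    rootSpace A n ≤
      Submodule.span ℚ (lieWord (gE A) '' {l | (fun i => (l.count i : ℤ)) = n}) := by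
  have hE := lieWord_mem_rootSpace (e := gE A) (c := 1) (by simpa using gE_mem_rootSpace)
  have hF := lieWord_mem_rootSpace (e := gF A) (c := -1) (by simpa using gF_mem_rootSpace)
  obtain ⟨i₀, hi₀⟩ := hn
  intro x hx
  have htop : x ∈ Submodule.span ℚ
      (Set.range (lieWord (gE A)) ∪ Set.range (gH A) ∪ Set.range (lieWord (gF A))) := by
    rw [Submodule.span_union, Submodule.span_union]
    exact (triangularSpan_generators_eq_top A).ge trivial
  have hweights : ∀ s ∈ Set.range (lieWord (gE A)) ∪ Set.range (gH A) ∪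
      Set.range (lieWord (gF A)), ∃ m, s ∈ rootSpace A m := by
    rintro _ ((⟨l, rfl⟩ | ⟨i, rfl⟩) | ⟨l, rfl⟩)
    exacts [⟨_, hE l⟩, ⟨_, gH_mem_rootSpace i⟩, ⟨_, hF l⟩]
  refine Submodule.span_le.2 ?_ (mem_span_inter_rootSpace hweights htop hx)
  rintro s ⟨hs, hsn⟩
  rcases eq_or_ne s 0 with rfl | hs0
  · exact Submodule.zero_mem _
  rcases hs with ((⟨l, rfl⟩ | ⟨i, rfl⟩) | ⟨l, rfl⟩)
  · have := eq_of_mem_rootSpace hA hs0 (hE l) hsn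
    exact Submodule.subset_span ⟨l, by simpa using this, rfl⟩
  · have hzero : 0 = n i₀ := congrFun (eq_of_mem_rootSpace hA hs0 (gH_mem_rootSpace i) hsn) i₀
    omega
  · have hneg : -(l.count i₀ : ℤ) = n i₀ := by
      simpa using congrFun (eq_of_mem_rootSpace hA hs0 (hF l) hsn) i₀
    omega

end RootSpaces

section WordModule

attribute [local instance] LieRing.ofAssociativeRing LieAlgebra.ofAssociativeAlgebra

variable {B : Type*}

/-- The free module on words in `B`, the module underlying the universal lowest weight module of
weight zero for the Chevalley relations without the Serre relations. -/
abbrev WordModule (B : Type*) : Type _ := List B →₀ ℚ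

namespace WordModule

/-- The raising operator, prepending a letter. -/
def e (j : B) : Module.End ℚ (WordModule B) := Finsupp.lmapDomain ℚ ℚ (List.cons j)

theorem e_single (j : B) (l : List B) (c : ℚ) :
    e j (Finsupp.single l c) = Finsupp.single (j :: l) c := by
  simp [e]

variable (A : Matrix B B ℤ)

/-- The weight of a word, as an eigenvalue of the `i`-th Cartan operator. -/
def weight (i : B) (l : List B) : ℤ := (l.map (A i)).sum

theorem weight_cons (i j : B) (l : List B) : weight A i (j :: l) = A i j + weight A i l := by
  simp [weight]

/-- The Cartan operator, diagonal on words. -/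
def h (i : B) : Module.End ℚ (WordModule B) :=
  Finsupp.linearCombination ℚ fun l => Finsupp.single l (weight A i l : ℚ)

theorem h_single (i : B) (l : List B) (c : ℚ) :
    h A i (Finsupp.single l c) = Finsupp.single l (c * weight A i l) := by
  simp [h]

theorem lie_h_e (i j : B) : ⁅h A i, e j⁆ = (A i j : ℚ) • e j := by
  ext l : 2
  simp [Ring.lie_def, h_single, e_single, weight_cons, Finsupp.single_add]

theorem eq_zero_of_lie_e_eq_zero {φ : Module.End ℚ (WordModule B)}
    (hφ : ∀ j : B, ⁅(e j : Module.End ℚ (WordModule B)), φ⁆ = 0)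
    (hvac : φ (Finsupp.single [] 1) = 0) : φ = 0 := by
  ext l : 2
  simp only [LinearMap.comp_apply, Finsupp.lsingle_apply, LinearMap.zero_comp, LinearMap.zero_apply]
  induction l with
  | nil => exact hvac
  | cons j l ih =>
    have := LinearMap.congr_fun (hφ j) (Finsupp.single l 1)
    simpa [Ring.lie_def, e_single, ih] using this

/-- The submodule of the word module generated, under the raising operators, by the images of
the Serre elements. -/
def serreSubmodule : Submodule ℚ (WordModule B) :=
  sInf {N | (∀ i j t, serreElement A e i j t ∈ N) ∧ ∀ j, ∀ t ∈ N, e j t ∈ N}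

variable {A}

theorem serreElement_mem_serreSubmodule (i j : B) (t : WordModule B) :
    serreElement A e i j t ∈ serreSubmodule A :=
  Submodule.mem_sInf.2 fun _ hN => hN.1 i j t

theorem e_mem_serreSubmodule (j : B) {t : WordModule B} (ht : t ∈ serreSubmodule A) :
    e j t ∈ serreSubmodule A :=
  Submodule.mem_sInf.2 fun N hN => hN.2 j t (Submodule.mem_sInf.1 ht N hN)

theorem serreSubmodule_le {N : Submodule ℚ (WordModule B)}
    (hserre : ∀ i j t, serreElement A e i j t ∈ N) (he : ∀ j, ∀ t ∈ N, e j t ∈ N) :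
    serreSubmodule A ≤ N :=
  sInf_le ⟨hserre, he⟩

theorem apply_mem_serreSubmodule {φ : Module.End ℚ (WordModule B)}
    (hserre : ∀ i j t, ⁅φ, serreElement A e i j⁆ t ∈ serreSubmodule A)
    (he : ∀ (j : B), ∀ t ∈ serreSubmodule A, ⁅φ, e j⁆ t ∈ serreSubmodule A)
    {t : WordModule B} (ht : t ∈ serreSubmodule A) : φ t ∈ serreSubmodule A := by
  have hswap : ∀ (ψ : Module.End ℚ (WordModule B)) s, φ (ψ s) = ⁅φ, ψ⁆ s + ψ (φ s) := by
    simp [Ring.lie_def]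
  refine (serreSubmodule_le (N := serreSubmodule A ⊓ (serreSubmodule A).comap φ)
    (fun i j s => ⟨serreElement_mem_serreSubmodule i j s, ?_⟩)
    (fun j s hs => ⟨e_mem_serreSubmodule j hs.1, ?_⟩) ht).2
  · change φ (serreElement A e i j s) ∈ serreSubmodule A
    rw [hswap]
    exact Submodule.add_mem _ (hserre i j s) (serreElement_mem_serreSubmodule i j _)
  · change φ (e j s) ∈ serreSubmodule A
    rw [hswap]
    exact Submodule.add_mem _ (he j s hs.1) (e_mem_serreSubmodule j hs.2)

theorem h_mem_serreSubmodule (k : B) {t : WordModule B}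
    (ht : t ∈ serreSubmodule A) : h A k t ∈ serreSubmodule A := by
  refine apply_mem_serreSubmodule (fun i j s => ?_) (fun j s hs => ?_) ht
  · rw [serreElement_eq_pow, lie_pow_ad_apply (lie_h_e A k i) (lie_h_e A k j),
      ← serreElement_eq_pow]
    exact Submodule.smul_mem _ _ (serreElement_mem_serreSubmodule i j s)
  · rw [lie_h_e]
    exact Submodule.smul_mem _ _ (e_mem_serreSubmodule j hs)

variable [DecidableEq B]

variable (A) in
/-- The value of the lowering operator on a word, forced by `f k (e j t) = e j (f k t)` for
`j ≠ k`, by `f k (e k t) = e k (f k t) - h k t`, and by `f k` killing the empty word. -/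
def fWord (k : B) : List B → WordModule B
  | [] => 0
  | j :: l => e j (fWord k l) - if j = k then h A k (Finsupp.single l 1) else 0

variable (A) in
/-- The lowering operator. -/
def f (k : B) : Module.End ℚ (WordModule B) := Finsupp.linearCombination ℚ (fWord A k)

variable (A) in
theorem f_single (k : B) (l : List B) (c : ℚ) : f A k (Finsupp.single l c) = c • fWord A k l := by
  simp [f]

variable (A) in
theorem h_fWord (i k : B) (l : List B) :
    h A i (fWord A k l) = ((weight A i l - A i k : ℤ) : ℚ) • fWord A k l := by
  induction l with
  | nil => simp [fWord]
  | cons j l ih =>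
    have hcomm := LinearMap.congr_fun (lie_h_e A i j) (fWord A k l)
    rw [Ring.lie_def, LinearMap.sub_apply, Module.End.mul_apply, Module.End.mul_apply, ih, map_smul,
      sub_eq_iff_eq_add, LinearMap.smul_apply, ← add_smul] at hcomm
    rw [fWord, map_sub, hcomm, weight_cons, smul_sub]
    congr 1
    · push_cast
      ring_nf
    · split_ifs with hjk
      · subst hjk
        simp [h_single, mul_comm]
      · simp

variable (A) in
theorem isChevalleySystem : IsChevalleySystem A (h A) e (f A) where
  lie_h_h i j := by
    ext l : 2
    simp [Ring.lie_def, h_single, mul_comm]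
  lie_e_f i j := by
    ext l : 2
    rcases eq_or_ne i j with rfl | hij
    · simp [Ring.lie_def, e_single, f_single, fWord]
    · simp [Ring.lie_def, e_single, f_single, fWord, hij]
  lie_h_e := lie_h_e A
  lie_h_f i j := by
    ext l : 2
    simp [Ring.lie_def, h_single, f_single, h_fWord, sub_smul]

theorem serreElement_f_eq_zero (hA : IsGCM A) (i j : B) : serreElement A (f A) i j = 0 := by
  have lie_e := (isChevalleySystem A).symm.lie_f_serreElement hA
  refine eq_zero_of_lie_e_eq_zero (fun k => lie_e k i j) ?_
  have hf : ∀ k, f A k (Finsupp.single [] 1) = 0 := fun k => by simp [f_single, fWord]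
  rw [serreElement_eq_pow]
  induction (-A i j).toNat + 1 with
  | zero => exact hf j
  | succ n ih => simp [pow_succ', Ring.lie_def, ih, hf]

theorem f_mem_serreSubmodule (hA : IsGCM A) (k : B) {t : WordModule B}
    (ht : t ∈ serreSubmodule A) : f A k t ∈ serreSubmodule A := by
  refine apply_mem_serreSubmodule (fun i j s => ?_) (fun j s hs => ?_) ht
  · rw [(isChevalleySystem A).lie_f_serreElement hA]
    exact Submodule.zero_mem _
  · rw [← lie_skew, (isChevalleySystem A).lie_e_f]
    split_ifs
    · exact Submodule.neg_mem _ (h_mem_serreSubmodule j hs)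
    · simp

variable (A) in
/-- The action of the free Lie algebra on the Chevalley generators. -/
def action : FreeLieAlgebra ℚ (Generators B) →ₗ⁅ℚ⁆ Module.End ℚ (WordModule B) :=
  FreeLieAlgebra.lift ℚ fun
    | Generators.H i => h A i
    | Generators.E i => e i
    | Generators.F i => f A i

theorem action_H (i : B) : action A (FreeLieAlgebra.of ℚ (Generators.H i)) = h A i := by
  simp [action]

theorem action_E (i : B) : action A (FreeLieAlgebra.of ℚ (Generators.E i)) = e i := by
  simp [action]

theorem action_F (i : B) : action A (FreeLieAlgebra.of ℚ (Generators.F i)) = f A i := by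
  simp [action]

theorem action_mem_serreSubmodule (hA : IsGCM A) (y : FreeLieAlgebra ℚ (Generators B))
    {t : WordModule B} (ht : t ∈ serreSubmodule A) : action A y t ∈ serreSubmodule A := by
  have htop : (lieStabilizer (Module.End ℚ (WordModule B)) (serreSubmodule A)).comap (action A) =
      ⊤ := by
    refine freeLieAlgebra_lieSubalgebra_eq_top _ ?_
    rintro (i | i | i) s hs
    · exact (action_H (A := A) i).symm ▸ h_mem_serreSubmodule i hs
    · exact (action_E (A := A) i).symm ▸ e_mem_serreSubmodule i hs
    · exact (action_F (A := A) i).symm ▸ f_mem_serreSubmodule hA i hs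
  exact mem_lieStabilizer.1 (htop.ge trivial : y ∈ _) t ht

/-- The ideal of the free Lie algebra acting by zero modulo the Serre submodule. -/
def actionIdeal (hA : IsGCM A) : LieIdeal ℚ (FreeLieAlgebra ℚ (Generators B)) where
  carrier := {y | ∀ t, action A y t ∈ serreSubmodule A}
  add_mem' hx hy t := by simpa using Submodule.add_mem _ (hx t) (hy t)
  zero_mem' t := by simp
  smul_mem' c y hy t := by simpa using Submodule.smul_mem _ c (hy t)
  lie_mem {x y} hy t := by
    rw [LieHom.map_lie, Ring.lie_def]
    exact Submodule.sub_mem _ (action_mem_serreSubmodule hA x (hy t)) (hy _)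

theorem toIdeal_le_actionIdeal (hA : IsGCM A) : Relations.toIdeal ℚ A ≤ actionIdeal hA := by
  have H := isChevalleySystem A
  have of_eq_zero : ∀ y, action A y = 0 → y ∈ actionIdeal hA := fun y hy t => by
    rw [hy]
    exact Submodule.zero_mem _
  have hserreE : ∀ i j, action A (Relations.adE ℚ A (i, j)) = serreElement A e i j := fun i j => by
    rw [← funext action_E]
    exact map_serreElement (action A) A (FreeLieAlgebra.of ℚ ∘ Generators.E) i j
  have hserreF : ∀ i j, action A (Relations.adF ℚ A (i, j)) = 0 := fun i j => by
    rw [← serreElement_f_eq_zero hA i j, ← funext action_F]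
    exact map_serreElement (action A) A (FreeLieAlgebra.of ℚ ∘ Generators.F) i j
  refine LieSubmodule.lieSpan_le.2 ?_
  rintro _ (((((⟨⟨i, j⟩, rfl⟩ | ⟨⟨i, j⟩, rfl⟩) | ⟨⟨i, j⟩, rfl⟩) | ⟨⟨i, j⟩, rfl⟩) |
    ⟨⟨i, j⟩, rfl⟩) | ⟨⟨i, j⟩, rfl⟩)
  · refine of_eq_zero _ ?_
    simp [Relations.HH, action_H, H.lie_h_h]
  · refine of_eq_zero _ ?_
    rcases eq_or_ne i j with rfl | hij
    · simp [Relations.EF, action_H, action_E, action_F, H.lie_e_f]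
    · simp [Relations.EF, action_E, action_F, H.lie_e_f, hij]
  · refine of_eq_zero _ ?_
    simp [Relations.HE, action_H, action_E, H.lie_h_e, Int.cast_smul_eq_zsmul]
  · refine of_eq_zero _ ?_
    simp [Relations.HF, action_H, action_F, H.lie_h_f, Int.cast_smul_eq_zsmul]
  · exact fun t => hserreE i j ▸ serreElement_mem_serreSubmodule i j t
  · exact of_eq_zero _ (hserreF i j)

end WordModule

end WordModule

section PositivePart

attribute [local instance] LieRing.ofAssociativeRing LieAlgebra.ofAssociativeAlgebra

variable {B R : Type*} [Ring R] [Algebra ℚ R]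

namespace WordModule

/-- The evaluation of words as products in an algebra. -/
def evalProd (E : B → R) : WordModule B →ₗ[ℚ] R :=
  Finsupp.linearCombination ℚ fun l => (l.map E).prod

theorem evalProd_lift_e (E : B → R) (y : FreeLieAlgebra ℚ B) (t : WordModule B) :
    evalProd E (FreeLieAlgebra.lift ℚ e y t) = FreeLieAlgebra.lift ℚ E y * evalProd E t := by
  let S : LieSubalgebra ℚ (FreeLieAlgebra ℚ B) :=
    { carrier := {y | ∀ t, evalProd E (FreeLieAlgebra.lift ℚ e y t) =
        FreeLieAlgebra.lift ℚ E y * evalProd E t}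
      add_mem' := fun hx hy t => by simp [hx t, hy t, add_mul]
      zero_mem' := fun t => by simp
      smul_mem' := fun c y hy t => by simp [hy t]
      lie_mem' := fun {x y} hx hy t => by
        simp only [Set.mem_ofPred_eq] at hx hy
        simp [Ring.lie_def, hx, hy, sub_mul, mul_assoc] }
  have hS : S = ⊤ := freeLieAlgebra_lieSubalgebra_eq_top S fun j t => by
    suffices evalProd E ∘ₗ e j = LinearMap.mulLeft ℚ (E j) ∘ₗ evalProd E by
      simpa using LinearMap.congr_fun this t
    ext l
    simp [evalProd, e_single]
  exact (hS.ge trivial : y ∈ S) t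

theorem lift_serreElement {L : Type*} [LieRing L] [LieAlgebra ℚ L] (A : Matrix B B ℤ) (E : B → L)
    (i j : B) :
    FreeLieAlgebra.lift ℚ E (serreElement A (FreeLieAlgebra.of ℚ) i j) = serreElement A E i j := by
  rw [map_serreElement, FreeLieAlgebra.of_comp_lift]

theorem evalProd_eq_zero_of_mem_serreSubmodule {A : Matrix B B ℤ} {E : B → R}
    (hE : ∀ i j, serreElement A E i j = 0) {t : WordModule B} (ht : t ∈ serreSubmodule A) :
    evalProd E t = 0 := by
  suffices serreSubmodule A ≤ LinearMap.ker (evalProd E) from this ht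
  refine serreSubmodule_le (fun i j s => ?_) (fun j s hs => ?_)
  · rw [LinearMap.mem_ker, ← lift_serreElement, evalProd_lift_e, lift_serreElement, hE, zero_mul]
  · have := evalProd_lift_e E (FreeLieAlgebra.of ℚ j) s
    simpa [LinearMap.mem_ker.1 hs] using this

end WordModule

variable [DecidableEq B] {A : Matrix B B ℤ}

theorem lift_eq_zero_of_lift_gE_eq_zero (hA : IsGCM A) {E : B → R}
    (hE : ∀ i j, serreElement A E i j = 0) {y : FreeLieAlgebra ℚ B}
    (hy : FreeLieAlgebra.lift ℚ (gE A) y = 0) : FreeLieAlgebra.lift ℚ E y = 0 := by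
  let incl : FreeLieAlgebra ℚ B →ₗ⁅ℚ⁆ FreeLieAlgebra ℚ (Generators B) :=
    FreeLieAlgebra.lift ℚ (FreeLieAlgebra.of ℚ ∘ Generators.E)
  have hproj : FreeLieAlgebra.lift ℚ (gE A) = (toKacMoody A).comp incl := by
    ext j
    simp [incl, toKacMoody_of, gE]
  have haction : FreeLieAlgebra.lift ℚ WordModule.e = (WordModule.action A).comp incl := by
    ext j : 1
    simp [incl, WordModule.action_E]
  rw [hproj, LieHom.comp_apply, toKacMoody_eq_zero_iff] at hy
  have hvac := WordModule.toIdeal_le_actionIdeal hA hy (Finsupp.single [] 1)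
  have := WordModule.evalProd_lift_e E y (Finsupp.single [] 1)
  rw [haction, LieHom.comp_apply, WordModule.evalProd_eq_zero_of_mem_serreSubmodule hE hvac] at this
  simpa [WordModule.evalProd] using this.symm

end PositivePart

section Minuscule

attribute [local instance] LieRing.ofAssociativeRing LieAlgebra.ofAssociativeAlgebra

variable {J X M : Type*} {C : Matrix J J ℤ} [AddCommGroup M] [Module ℚ M]

/-- A union of Weyl group orbits of minuscule weights for a symmetric simply laced Cartan matrix
`C`, indexed by `X`. The simple reflection `reflect j` is only constrained at the points it moves,
and `height` certifies that every point is reached by raising from a lowest one. -/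
structure MinusculeSystem (C : Matrix J J ℤ) (X : Type*) where
  wt : X → J → ℤ
  reflect : J → X → X
  height : X → ℕ
  diag : ∀ j, C j j = 2
  isSymm : C.IsSymm
  isSimplyLaced : C.IsSimplyLaced
  wt_mem : ∀ x j, wt x j = -1 ∨ wt x j = 0 ∨ wt x j = 1
  wt_injective : Function.Injective wt
  wt_reflect : ∀ x j, wt x j ≠ 0 → ∀ i, wt (reflect j x) i = wt x i - wt x j * C i j
  height_reflect : ∀ x j, wt x j = -1 → height (reflect j x) = height x + 1

theorem apply_comm_of_serreElement_eq_zero {a : J → Module.End ℚ M} {i j : J}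
    (ha : serreElement C a i j = 0) (hij : C i j = 0) (m : M) : a i (a j m) = a j (a i m) := by
  have := LinearMap.congr_fun ha m
  simpa [serreElement, hij, Ring.lie_def, sub_eq_zero] using this

theorem apply_apply_apply_of_serreElement_eq_zero {a : J → Module.End ℚ M} {i j : J}
    (ha : serreElement C a i j = 0) (hij : C i j = -1) (m : M) :
    a i (a i (a j m)) + a j (a i (a i m)) = (2 : ℚ) • a i (a j (a i m)) := by
  have := LinearMap.congr_fun ha m
  simp only [serreElement, hij, neg_neg, Int.toNat_one, pow_one, LieAlgebra.ad_apply, Ring.lie_def,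
    LinearMap.sub_apply, Module.End.mul_apply, map_sub, LinearMap.zero_apply] at this
  rw [two_smul, ← sub_eq_zero, ← this]
  abel

namespace MinusculeSystem

variable (S : MinusculeSystem C X)

theorem wt_reflect_self {x : X} {j : J} (h : S.wt x j ≠ 0) :
    S.wt (S.reflect j x) j = -S.wt x j := by
  rw [S.wt_reflect x j h, S.diag]
  ring

theorem reflect_reflect {x : X} {j : J} (h : S.wt x j ≠ 0) :
    S.reflect j (S.reflect j x) = x := by
  have hself := S.wt_reflect_self h
  refine S.wt_injective (funext fun i => ?_)
  rw [S.wt_reflect _ j (by rwa [hself, neg_ne_zero]), hself, S.wt_reflect x j h]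
  ring

theorem wt_reflect_of_eq_zero {x : X} {i j : J} (hij : C i j = 0) (h : S.wt x j ≠ 0) :
    S.wt (S.reflect j x) i = S.wt x i := by
  rw [S.wt_reflect x j h, hij]
  ring

theorem reflect_comm {x : X} {i j : J} (hij : C i j = 0) (hi : S.wt x i ≠ 0)
    (hj : S.wt x j ≠ 0) : S.reflect i (S.reflect j x) = S.reflect j (S.reflect i x) := by
  have hji : C j i = 0 := (S.isSymm.apply i j).trans hij
  have hi' := S.wt_reflect_of_eq_zero hij hj
  have hj' := S.wt_reflect_of_eq_zero hji hi
  refine S.wt_injective (funext fun k => ?_)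
  have hl := S.wt_reflect (S.reflect j x) i (by rwa [hi']) k
  have hr := S.wt_reflect (S.reflect i x) j (by rwa [hj']) k
  rw [hi', S.wt_reflect x j hj] at hl
  rw [hj', S.wt_reflect x i hi] at hr
  linarith

theorem height_reflect_of_eq_one {x : X} {j : J} (h : S.wt x j = 1) :
    S.height (S.reflect j x) + 1 = S.height x := by
  have h0 : S.wt x j ≠ 0 := by omega
  rw [← S.height_reflect (S.reflect j x) j (by rw [S.wt_reflect_self h0, h]), S.reflect_reflect h0]

open Classical in
/-- The vectors generated from lowest weight vectors `v b` by applying the raising operators `a`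
along a chosen path. -/
def orbit (a : J → Module.End ℚ M) (v : X → M) (x : X) : M :=
  if h : ∃ j, S.wt x j = 1 then a h.choose (orbit a v (S.reflect h.choose x)) else v x
termination_by S.height x
decreasing_by have := S.height_reflect_of_eq_one h.choose_spec; omega

/-- The operators `a` act on the vector `s x` as prescribed by the weight of `x`. -/
structure IsMinusculeAt (a : J → Module.End ℚ M) (s : X → M) (x : X) : Prop where
  eq_raise : ∀ i, S.wt x i = 1 → s x = a i (s (S.reflect i x))
  raise_eq_zero : ∀ j, S.wt x j ≠ -1 → a j (s x) = 0

variable {S}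
variable {a : J → Module.End ℚ M} {s v : X → M} {x : X}

theorem raise_eq_of_forall_lt (ha : ∀ i j, serreElement C a i j = 0)
    (ih : ∀ y, S.height y < S.height x → S.IsMinusculeAt a s y) {i j : J}
    (hi : S.wt x i = 1) (hj : S.wt x j = 1) :
    a i (s (S.reflect i x)) = a j (s (S.reflect j x)) := by
  rcases eq_or_ne i j with rfl | hij
  · rfl
  have hi0 : S.wt x i ≠ 0 := by omega
  have hj0 : S.wt x j ≠ 0 := by omega
  have hC : C i j = 0 := by
    have := S.wt_reflect x j hj0 i
    have := S.wt_mem (S.reflect j x) i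
    have := S.isSimplyLaced hij
    rw [hi, hj] at *
    omega
  have hC' : C j i = 0 := (S.isSymm.apply i j).trans hC
  have hlt_i := S.height_reflect_of_eq_one hi
  have hlt_j := S.height_reflect_of_eq_one hj
  rw [(ih (S.reflect i x) (by omega)).eq_raise j (by rw [S.wt_reflect_of_eq_zero hC' hi0, hj]),
    (ih (S.reflect j x) (by omega)).eq_raise i (by rw [S.wt_reflect_of_eq_zero hC hj0, hi]),
    S.reflect_comm hC hi0 hj0, apply_comm_of_serreElement_eq_zero (ha i j) hC]

theorem raise_raise_eq_zero_of_forall_le (ha : ∀ i j, serreElement C a i j = 0)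
    (hlowest : ∀ b, (∀ j, S.wt b j ≠ 1) → ∀ j, a j (a j (s b)) = 0)
    (ih : ∀ y, S.height y ≤ S.height x → S.IsMinusculeAt a s y) {i : J} (hi : S.wt x i = -1) :
    a i (a i (s x)) = 0 := by
  by_cases hx : ∀ j, S.wt x j ≠ 1
  · exact hlowest x hx i
  push Not at hx
  obtain ⟨k, hk⟩ := hx
  have hik : i ≠ k := by rintro rfl; omega
  have hlt := S.height_reflect_of_eq_one hk
  have hwt := S.wt_reflect x k (by omega) i
  have hu := ih (S.reflect k x) (by omega)
  rw [(ih x le_rfl).eq_raise k hk]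
  rcases S.isSimplyLaced hik with hC | hC
  · have hwt_u : S.wt (S.reflect k x) i = -1 := by rw [hwt, hi, hC]; ring
    have hwt_r := S.wt_reflect_self (x := S.reflect k x) (j := i) (by omega)
    have hrefl := S.reflect_reflect (x := S.reflect k x) (j := i) (by omega)
    have hup := ih (S.reflect i (S.reflect k x)) (by rw [S.height_reflect _ i hwt_u]; omega)
    have hraise := hup.eq_raise i (by omega)
    rw [hrefl] at hraise
    rw [apply_comm_of_serreElement_eq_zero (ha i k) hC, ← hraise,
      apply_comm_of_serreElement_eq_zero (ha i k) hC, hup.raise_eq_zero i (by omega), map_zero]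
  · have h0 := hu.raise_eq_zero i (by rw [hwt, hi, hk, hC]; omega)
    simpa [h0] using apply_apply_apply_of_serreElement_eq_zero (ha i k) hC (s (S.reflect k x))

theorem raise_eq_zero_of_forall_lt (ha : ∀ i j, serreElement C a i j = 0)
    (hlowest : ∀ b, (∀ j, S.wt b j ≠ 1) → ∀ j, a j (a j (s b)) = 0)
    (ih : ∀ y, S.height y < S.height x → S.IsMinusculeAt a s y) {i j : J} (hi : S.wt x i = 1)
    (hj : S.wt x j ≠ -1) : a j (a i (s (S.reflect i x))) = 0 := by
  have hlt := S.height_reflect_of_eq_one hi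
  have hself := S.wt_reflect_self (x := x) (j := i) (by omega)
  have ht := ih (S.reflect i x) (by omega)
  rcases eq_or_ne i j with rfl | hij
  · exact raise_raise_eq_zero_of_forall_le ha hlowest (fun y hy => ih y (by omega)) (by omega)
  have hwt_j := S.wt_reflect x i (by omega) j
  rw [hi, S.isSymm.apply i j] at hwt_j
  rcases S.isSimplyLaced hij with hC | hC
  · rw [← apply_comm_of_serreElement_eq_zero (ha i j) hC, ht.raise_eq_zero j (by omega), map_zero]
  · have hj1 : S.wt (S.reflect i x) j = 1 := by
      have := S.wt_mem (S.reflect i x) j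
      have := S.wt_mem x j
      omega
    have hwt_i := S.wt_reflect (S.reflect i x) j (by omega) i
    rw [hj1, hC, hself, hi] at hwt_i
    have hlt' := S.height_reflect_of_eq_one hj1
    have hu := ih (S.reflect j (S.reflect i x)) (by omega)
    have h0 := hu.raise_eq_zero i (by omega)
    have h1 := ht.raise_eq_zero j (by omega)
    have hC' : C j i = -1 := (S.isSymm.apply i j).trans hC
    have hserre := apply_apply_apply_of_serreElement_eq_zero (ha j i) hC'
      (s (S.reflect j (S.reflect i x)))
    rw [← ht.eq_raise j hj1, h0, h1] at hserre
    simpa using hserre.symm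

theorem orbit_induction {p : X → M → Prop} (hv : ∀ b, (∀ j, S.wt b j ≠ 1) → p b (v b))
    (ha : ∀ y j, S.wt y j = -1 → p y (S.orbit a v y) → p (S.reflect j y) (a j (S.orbit a v y)))
    (x : X) : p x (S.orbit a v x) := by
  induction hn : S.height x using Nat.strong_induction_on generalizing x with
  | _ n ih =>
    subst hn
    rw [orbit]
    split_ifs with hx
    · have hwt := hx.choose_spec
      have hself := S.wt_reflect_self (x := x) (j := hx.choose) (by omega)
      have hlt := S.height_reflect_of_eq_one hwt
      have := ha _ hx.choose (by omega) (ih (S.height (S.reflect hx.choose x)) (by omega) _ rfl)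
      rwa [S.reflect_reflect (by omega)] at this
    · exact hv x (by simpa using hx)

theorem map_orbit {M' : Type*} [AddCommGroup M'] [Module ℚ M'] (φ : M →ₗ[ℚ] M')
    {a' : J → Module.End ℚ M'} (hφ : ∀ j m, φ (a j m) = a' j (φ m)) (x : X) :
    φ (S.orbit a v x) = S.orbit a' (φ ∘ v) x := by
  induction hn : S.height x using Nat.strong_induction_on generalizing x with
  | _ n ih =>
    subst hn
    rw [orbit, orbit]
    split_ifs with hx
    · have hlt := S.height_reflect_of_eq_one hx.choose_spec
      rw [hφ, ih _ (by omega) _ rfl]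
    · rfl

theorem orbit_of_lowest (hx : ∀ j, S.wt x j ≠ 1) : S.orbit a v x = v x := by
  rw [orbit, dif_neg (by simpa using hx)]

theorem isMinusculeAt_orbit (ha : ∀ i j, serreElement C a i j = 0)
    (hv : ∀ b, (∀ j, S.wt b j ≠ 1) → ∀ j, S.wt b j ≠ -1 → a j (v b) = 0)
    (hv2 : ∀ b, (∀ j, S.wt b j ≠ 1) → ∀ j, a j (a j (v b)) = 0) (x : X) :
    S.IsMinusculeAt a (S.orbit a v) x := by
  induction hn : S.height x using Nat.strong_induction_on generalizing x with
  | _ n ih =>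
    subst hn
    replace ih : ∀ y, S.height y < S.height x → S.IsMinusculeAt a (S.orbit a v) y :=
      fun y hy => ih _ hy y rfl
    have eq_raise : ∀ i, S.wt x i = 1 → S.orbit a v x = a i (S.orbit a v (S.reflect i x)) := by
      intro i hi
      have hex : ∃ j, S.wt x j = 1 := ⟨i, hi⟩
      rw [orbit, dif_pos hex, raise_eq_of_forall_lt ha ih hex.choose_spec hi]
    refine ⟨eq_raise, fun j hj => ?_⟩
    by_cases hx : ∀ i, S.wt x i ≠ 1
    · rw [orbit_of_lowest hx, hv x hx j hj]
    · push Not at hx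
      obtain ⟨i, hi⟩ := hx
      rw [eq_raise i hi]
      refine raise_eq_zero_of_forall_lt ha (fun b hb k => ?_) ih hi hj
      rw [orbit_of_lowest hb, hv2 b hb]

theorem raise_orbit (ha : ∀ i j, serreElement C a i j = 0)
    (hv : ∀ b, (∀ j, S.wt b j ≠ 1) → ∀ j, S.wt b j ≠ -1 → a j (v b) = 0)
    (hv2 : ∀ b, (∀ j, S.wt b j ≠ 1) → ∀ j, a j (a j (v b)) = 0) (x : X) (j : J) :
    a j (S.orbit a v x) = if S.wt x j = -1 then S.orbit a v (S.reflect j x) else 0 := by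
  split_ifs with hj
  · have hself := S.wt_reflect_self (x := x) (j := j) (by omega)
    rw [(isMinusculeAt_orbit ha hv hv2 (S.reflect j x)).eq_raise j (by omega),
      S.reflect_reflect (by omega)]
  · exact (isMinusculeAt_orbit ha hv hv2 x).raise_eq_zero j hj

variable (S) in
/-- The raising operators of the minuscule representation with weight basis `X`. -/
def raise (j : J) : Module.End ℚ (X →₀ ℚ) :=
  Finsupp.linearCombination ℚ fun x =>
    if S.wt x j = -1 then Finsupp.single (S.reflect j x) 1 else 0

theorem raise_single (j : J) (x : X) (c : ℚ) :
    S.raise j (Finsupp.single x c) =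
      if S.wt x j = -1 then Finsupp.single (S.reflect j x) c else 0 := by
  simp [raise]

theorem raise_mul_raise_self (j : J) : S.raise j * S.raise j = 0 := by
  ext x : 2
  have := S.wt_reflect_self (x := x) (j := j)
  by_cases hj : S.wt x j = -1
  · simp_all [raise_single]
  · simp [raise_single, hj]

theorem raise_mul_raise_mul_raise {i j : J} (hij : C i j = -1) :
    S.raise i * (S.raise j * S.raise i) = 0 := by
  ext x : 2
  by_cases hi : S.wt x i = -1
  · have hji := S.wt_reflect x i (by omega) j
    have hii := S.wt_reflect_self (x := x) (j := i) (by omega)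
    by_cases hj : S.wt (S.reflect i x) j = -1
    · have := S.wt_reflect (S.reflect i x) j (by omega) i
      have hne : S.wt (S.reflect j (S.reflect i x)) i ≠ -1 := by
        rw [this, hj, hii, hi, hij]
        omega
      simp [raise_single, hi, hj, hne]
    · simp [raise_single, hi, hj]
  · simp [raise_single, hi]

theorem commute_raise {i j : J} (hij : C i j = 0) : Commute (S.raise i) (S.raise j) := by
  ext x : 2
  have hji : C j i = 0 := (S.isSymm.apply i j).trans hij
  by_cases hi : S.wt x i = -1 <;> by_cases hj : S.wt x j = -1
  · simp [raise_single, hi, hj, S.wt_reflect_of_eq_zero hij, S.wt_reflect_of_eq_zero hji,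
      S.reflect_comm hij]
  · simp [raise_single, hi, hj, S.wt_reflect_of_eq_zero hji]
  · simp [raise_single, hi, hj, S.wt_reflect_of_eq_zero hij]
  · simp [raise_single, hi, hj]

theorem serreElement_raise (i j : J) : serreElement C S.raise i j = 0 := by
  rcases eq_or_ne i j with rfl | hij
  · exact serreElement_self S.diag _ i
  rcases S.isSimplyLaced hij with hC | hC
  · simp [serreElement, hC, Ring.lie_def, (S.commute_raise hC).eq]
  · simp [serreElement, hC, Ring.lie_def, mul_sub, sub_mul, mul_assoc, raise_mul_raise_self,
      raise_mul_raise_mul_raise hC, ← mul_assoc (S.raise i) (S.raise i)]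

end MinusculeSystem

end Minuscule

section Spin

/-- The occupation number of the mode `k` in the state `w`. -/
def occupation (w : Finset (Fin 10)) (k : Fin 10) : ℤ := if k ∈ w then 1 else 0

theorem occupation_injective : Function.Injective occupation := by
  intro w w' h
  ext k
  have := congrFun h k
  by_cases hk : k ∈ w <;> by_cases hk' : k ∈ w' <;> simp_all [occupation]

/-- The coordinates of the simple roots `ε_j - ε_{j+1}` (`j ≤ 8`) and `ε_8 + ε_9` (`j = 9`)
of `D10`. -/
def simpleRoot (j : Fin 10) : Fin 10 → ℤ :=
  if j = 9 then Pi.single 8 1 + Pi.single 9 1 else Pi.single j 1 - Pi.single (j + 1) 1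

theorem simpleRoot_mul_transpose :
    Matrix.of simpleRoot * (Matrix.of simpleRoot).transpose = CartanMatrix.D 10 := by
  decide +kernel

theorem sum_simpleRoot_mul_simpleRoot (i j : Fin 10) :
    ∑ k, simpleRoot i k * simpleRoot j k = CartanMatrix.D 10 i j := by
  rw [← simpleRoot_mul_transpose]
  simp [Matrix.mul_apply]

/-- The weight `∑_{k ∈ w} ε_k - (1/2) ∑_k ε_k` of the spin representations of `D10`, in
coordinates dual to the simple roots. -/
def spinWeight (w : Finset (Fin 10)) (j : Fin 10) : ℤ :=
  ∑ k, simpleRoot j k * occupation w k - if j = 9 then 1 else 0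

theorem spinWeight_empty (j : Fin 10) : spinWeight ∅ j = if j = 9 then -1 else 0 := by
  rw [spinWeight]
  split_ifs <;> simp [occupation]

theorem spinWeight_of_ne {j : Fin 10} (hj : j ≠ 9) (w : Finset (Fin 10)) :
    spinWeight w j = occupation w j - occupation w (j + 1) := by
  simp [spinWeight, simpleRoot, hj, sub_mul, Finset.sum_sub_distrib, Pi.single_apply]

theorem spinWeight_nine (w : Finset (Fin 10)) :
    spinWeight w 9 = occupation w 8 + occupation w 9 - 1 := by
  simp [spinWeight, simpleRoot, add_mul, Finset.sum_add_distrib, Pi.single_apply]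

theorem spinWeight_mem (w : Finset (Fin 10)) (j : Fin 10) :
    spinWeight w j = -1 ∨ spinWeight w j = 0 ∨ spinWeight w j = 1 := by
  rcases eq_or_ne j 9 with rfl | hj
  · rw [spinWeight_nine]
    grind [occupation]
  · rw [spinWeight_of_ne hj]
    grind [occupation]

theorem eq_empty_or_eq_singleton_nine_of_spinWeight_ne_one {w : Finset (Fin 10)}
    (hw : ∀ j, spinWeight w j ≠ 1) : w = ∅ ∨ w = {9} := by
  have hsucc (j : Fin 10) (hj : j ≠ 9) : j ∈ w → j + 1 ∈ w := by
    have := hw j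
    rw [spinWeight_of_ne hj] at this
    grind [occupation]
  have hlast : ¬(8 ∈ w ∧ 9 ∈ w) := by
    have := hw 9
    rw [spinWeight_nine] at this
    grind [occupation]
  have hnotMem (j : Fin 9) : j.castSucc ∉ w := by
    induction j using Fin.reverseInduction with
    | last => exact fun h => hlast ⟨h, hsucc 8 (by decide) h⟩
    | cast j ih => exact fun h => ih (by simpa using hsucc _ (Fin.castSucc_ne_last _) h)
  refine Finset.subset_singleton_iff.1 fun k hk => Finset.mem_singleton.2 ?_
  by_contra hk9
  obtain ⟨j, rfl⟩ := Fin.exists_castSucc_eq.2 hk9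
  exact hnotMem j hk

theorem spinWeight_compl (w : Finset (Fin 10)) (j : Fin 10) :
    spinWeight wᶜ j = -spinWeight w j := by
  have hocc : ∀ k, occupation wᶜ k = 1 - occupation w k := by
    grind [occupation, Finset.mem_compl]
  rcases eq_or_ne j 9 with rfl | hj
  · rw [spinWeight_nine, spinWeight_nine, hocc, hocc]
    ring
  · rw [spinWeight_of_ne hj, spinWeight_of_ne hj, hocc, hocc]
    ring

/-- The two modes involved in the `j`-th simple root. -/
def rootModes (j : Fin 10) : Finset (Fin 10) := if j = 9 then {8, 9} else {j, j + 1}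

/-- The state whose occupation numbers differ from those of `w` at the modes of the `j`-th simple
root. -/
def spinReflect (j : Fin 10) (w : Finset (Fin 10)) : Finset (Fin 10) := symmDiff w (rootModes j)

theorem occupation_spinReflect {w : Finset (Fin 10)} {j : Fin 10} (h : spinWeight w j ≠ 0)
    (k : Fin 10) :
    occupation (spinReflect j w) k = occupation w k - spinWeight w j * simpleRoot j k := by
  rcases eq_or_ne j 9 with rfl | hj
  · rw [spinWeight_nine] at h ⊢
    by_cases h8 : (8 : Fin 10) ∈ w <;> by_cases h9 : (9 : Fin 10) ∈ w <;>
      by_cases hk8 : k = 8 <;> by_cases hk9 : k = 9 <;>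
      simp_all [occupation, spinReflect, rootModes, simpleRoot, Finset.mem_symmDiff]
  · have hne : j ≠ j + 1 := by omega
    rw [spinWeight_of_ne hj] at h ⊢
    by_cases h0 : j ∈ w <;> by_cases h1 : j + 1 ∈ w <;>
      by_cases hk0 : k = j <;> by_cases hk1 : k = j + 1 <;>
      simp_all [occupation, spinReflect, rootModes, simpleRoot, Finset.mem_symmDiff]

theorem spinWeight_spinReflect {w : Finset (Fin 10)} {j : Fin 10} (h : spinWeight w j ≠ 0)
    (i : Fin 10) :
    spinWeight (spinReflect j w) i = spinWeight w i - spinWeight w j * CartanMatrix.D 10 i j := by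
  simp only [spinWeight.eq_def (spinReflect j w), occupation_spinReflect h,
    ← sum_simpleRoot_mul_simpleRoot, mul_sub, Finset.sum_sub_distrib, Finset.mul_sum]
  rw [spinWeight.eq_def w i, Finset.sum_congr rfl fun k _ => mul_left_comm _ (spinWeight w j) _]
  ring

theorem spinWeight_injective : Function.Injective spinWeight := by
  intro w w' h
  refine occupation_injective (funext fun k => ?_)
  have h9 := congrFun h 9
  rw [spinWeight_nine, spinWeight_nine] at h9
  have hchain : ∀ j : Fin 10, j ≠ 9 →
      occupation w j - occupation w (j + 1) = occupation w' j - occupation w' (j + 1) := by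
    intro j hj
    rw [← spinWeight_of_ne hj, ← spinWeight_of_ne hj, h]
  have h0 := hchain 0 (by decide)
  have h1 := hchain 1 (by decide)
  have h2 := hchain 2 (by decide)
  have h3 := hchain 3 (by decide)
  have h4 := hchain 4 (by decide)
  have h5 := hchain 5 (by decide)
  have h6 := hchain 6 (by decide)
  have h7 := hchain 7 (by decide)
  have h8 := hchain 8 (by decide)
  simp only [Fin.reduceAdd] at *
  fin_cases k <;> simp only [Fin.reduceFinMk] <;> omega

/-- The height above the empty state. -/
def spinHeight (w : Finset (Fin 10)) : ℕ := ∑ k ∈ w, (9 - k.val)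

theorem natCast_spinHeight (w : Finset (Fin 10)) :
    (spinHeight w : ℤ) = ∑ k, (9 - k.val : ℤ) * occupation w k := by
  simp only [spinHeight, Nat.cast_sum, occupation, mul_ite, mul_one, mul_zero, Finset.sum_ite_mem,
    Finset.univ_inter]
  exact Finset.sum_congr rfl fun k _ => by omega

theorem spinHeight_spinReflect {w : Finset (Fin 10)} {j : Fin 10} (h : spinWeight w j = -1) :
    spinHeight (spinReflect j w) = spinHeight w + 1 := by
  have hroot : ∀ j : Fin 10, ∑ k : Fin 10, (9 - k.val : ℤ) * simpleRoot j k = 1 := by decide +kernel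
  have hocc := occupation_spinReflect (w := w) (j := j) (by omega)
  zify
  simp only [natCast_spinHeight, hocc, h, neg_one_mul, sub_neg_eq_add, mul_add,
    Finset.sum_add_distrib, hroot]

/-- The two spin representations of `D10`, on the states with an even and with an odd number of
occupied modes. -/
def spinSystem : MinusculeSystem (CartanMatrix.D 10) (Finset (Fin 10)) where
  wt := spinWeight
  reflect := spinReflect
  height := spinHeight
  diag := by simp
  isSymm := CartanMatrix.D_isSymm 10
  isSimplyLaced := CartanMatrix.isSimplyLaced_D 10
  wt_mem := spinWeight_mem
  wt_injective := spinWeight_injective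
  wt_reflect w j h i := spinWeight_spinReflect h i
  height_reflect w j h := spinHeight_spinReflect h

theorem raise_spinSystem_single (j : Fin 10) (w : Finset (Fin 10)) (r : ℚ) :
    spinSystem.raise j (Finsupp.single w r) =
      if spinWeight w j = -1 then Finsupp.single (spinReflect j w) r else 0 :=
  MinusculeSystem.raise_single j w r

end Spin

section Walsh

variable {ι : Type*} [DecidableEq ι]

/-- The Walsh character of the group of subsets of `ι` attached to `I`. -/
def walsh (I w : Finset ι) : ℚ := (-1) ^ (I ∩ w).card

theorem walsh_eq_prod (I w : Finset ι) : walsh I w = ∏ k ∈ w, if k ∈ I then -1 else 1 := by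
  rw [walsh, Finset.prod_ite_mem, Finset.prod_const, Finset.inter_comm]

theorem walsh_comm (I w : Finset ι) : walsh I w = walsh w I := by
  rw [walsh, walsh, Finset.inter_comm]

theorem walsh_empty (w : Finset ι) : walsh ∅ w = 1 := by simp [walsh]

theorem walsh_mul_self (I w : Finset ι) : walsh I w * walsh I w = 1 := by
  rw [walsh, ← mul_pow, neg_one_mul, neg_neg, one_pow]

theorem walsh_mul_walsh (I J w : Finset ι) :
    walsh I w * walsh J w = walsh (symmDiff I J) w := by
  simp only [walsh_eq_prod, ← Finset.prod_mul_distrib]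
  refine Finset.prod_congr rfl fun k _ => ?_
  by_cases hI : k ∈ I <;> by_cases hJ : k ∈ J <;> simp [Finset.mem_symmDiff, hI, hJ]

theorem walsh_symmDiff (I v w : Finset ι) : walsh I (symmDiff v w) = walsh I v * walsh I w := by
  simp only [walsh_comm I, walsh_mul_walsh]

variable [Fintype ι]

theorem walsh_univ (w : Finset ι) : walsh Finset.univ w = (-1) ^ w.card := by simp [walsh]

theorem walsh_compl (I w : Finset ι) : walsh I wᶜ = (-1) ^ I.card * walsh I w := by
  have hcompl : wᶜ = symmDiff Finset.univ w := by ext; simp [Finset.mem_symmDiff]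
  rw [hcompl, walsh_symmDiff, walsh_comm, walsh_univ]

theorem sum_walsh (I : Finset ι) :
    ∑ w, walsh I w = if I = ∅ then 2 ^ Fintype.card ι else 0 := by
  split_ifs with hI
  · simp [hI, walsh]
  · obtain ⟨k, hk⟩ := Finset.nonempty_iff_ne_empty.2 hI
    simp only [walsh_eq_prod]
    rw [← Finset.powerset_univ, ← Finset.prod_one_add]
    exact Finset.prod_eq_zero (Finset.mem_univ k) (by simp [hk])

theorem sum_walsh_mul_walsh (I J : Finset ι) :
    ∑ w, walsh I w * walsh J w = if I = J then 2 ^ Fintype.card ι else 0 := by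
  simp only [walsh_mul_walsh, sum_walsh, ← Finset.bot_eq_empty, symmDiff_eq_bot]

end Walsh

section SpinVector

attribute [local instance] LieRing.ofAssociativeRing LieAlgebra.ofAssociativeAlgebra

/-- The position in the Dynkin diagram of `E11` of the `j`-th node of its `D10` subdiagram, which
consists of all the nodes but that of index `9`. -/
def spinNode : Fin 10 → Fin 11 := ![0, 1, 2, 3, 4, 5, 6, 7, 10, 8]

theorem E11M_submatrix_spinNode : E11M.submatrix spinNode spinNode = CartanMatrix.D 10 := by
  decide

theorem exists_spinNode_eq : ∀ {i : Fin 11}, i ≠ 9 → ∃ j, spinNode j = i := by decide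

theorem spinNode_ne_nine : ∀ j, spinNode j ≠ 9 := by decide

theorem E11M_spinNode_nine (j : Fin 10) : E11M (spinNode j) 9 = spinWeight ∅ j := by
  rw [spinWeight_empty]
  revert j
  decide

theorem odd_card_spinReflect (j : Fin 10) (w : Finset (Fin 10)) :
    Odd (spinReflect j w).card ↔ Odd w.card := by
  have hmodes : (rootModes j).card = 2 := by
    revert j
    decide
  rw [← neg_one_pow_eq_neg_one_iff_odd (R := ℚ) (by norm_num), ← walsh_univ, spinReflect,
    walsh_symmDiff, walsh_univ, walsh_univ, hmodes, even_two.neg_one_pow, mul_one,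
    neg_one_pow_eq_neg_one_iff_odd (by norm_num)]

theorem isGCM_E11M : IsGCM E11M := by
  refine ⟨by decide, fun i j hij => ?_, fun i j => ?_⟩
  · grind [E11M]
  · grind [E11M]

theorem mulVec_E11M (n : Fin 11 → ℤ) :
    E11M.mulVec n = ![2 * n 0 - n 1, 2 * n 1 - n 0 - n 2, 2 * n 2 - n 1 - n 3,
      2 * n 3 - n 2 - n 4, 2 * n 4 - n 3 - n 5, 2 * n 5 - n 4 - n 6, 2 * n 6 - n 5 - n 7,
      2 * n 7 - n 6 - n 8 - n 10, 2 * n 8 - n 7 - n 9, 2 * n 9 - n 8, 2 * n 10 - n 7] := by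
  ext i
  fin_cases i <;> simp [Matrix.mulVec, dotProduct, Fin.sum_univ_succ, E11M] <;> ring

theorem eq_zero_of_mulVec_E11M_eq_zero {n : Fin 11 → ℤ} (h : ∀ i ≠ 9, E11M.mulVec n i = 0)
    (h9 : n 9 = 0 ∨ E11M.mulVec n 9 = 0) : n = 0 := by
  rw [mulVec_E11M] at h h9
  have h0 : 2 * n 0 - n 1 = 0 := h 0 (by decide)
  have h1 : 2 * n 1 - n 0 - n 2 = 0 := h 1 (by decide)
  have h2 : 2 * n 2 - n 1 - n 3 = 0 := h 2 (by decide)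
  have h3 : 2 * n 3 - n 2 - n 4 = 0 := h 3 (by decide)
  have h4 : 2 * n 4 - n 3 - n 5 = 0 := h 4 (by decide)
  have h5 : 2 * n 5 - n 4 - n 6 = 0 := h 5 (by decide)
  have h6 : 2 * n 6 - n 5 - n 7 = 0 := h 6 (by decide)
  have h7 : 2 * n 7 - n 6 - n 8 - n 10 = 0 := h 7 (by decide)
  have h8 : 2 * n 8 - n 7 - n 9 = 0 := h 8 (by decide)
  have h9 : n 9 = 0 ∨ 2 * n 9 - n 8 = 0 := h9
  have h10 : 2 * n 10 - n 7 = 0 := h 10 (by decide)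
  ext i
  fin_cases i <;> simp only [Fin.reduceFinMk, Pi.zero_apply] <;> omega

theorem mulVec_E11M_injective : Function.Injective E11M.mulVec := by
  intro m n hmn
  refine sub_eq_zero.1 (eq_zero_of_mulVec_E11M_eq_zero (fun i _ => ?_) (Or.inr ?_)) <;>
    simp [Matrix.mulVec_sub, hmn]

variable {L L' : Type*} [LieRing L] [LieAlgebra ℚ L] [LieRing L'] [LieAlgebra ℚ L']

/-- The level one vectors generated by `E 9` under the `E i` with `i ≠ 9`. They form a spin
representation of `D10`, and the vectors of the states with an odd number of occupied modes are
made to vanish. -/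
def spinVector (E : Fin 11 → L) : Finset (Fin 10) → L :=
  spinSystem.orbit (fun j => LieAlgebra.ad ℚ L (E (spinNode j))) fun w => if w = ∅ then E 9 else 0

variable {E : Fin 11 → L}

theorem map_spinVector (φ : L →ₗ⁅ℚ⁆ L') (w : Finset (Fin 10)) :
    φ (spinVector E w) = spinVector (φ ∘ E) w := by
  have hcomp : (fun w : Finset (Fin 10) => if w = ∅ then (φ ∘ E) 9 else 0) =
      φ ∘ fun w => if w = ∅ then E 9 else 0 := by
    ext w
    split_ifs with hw <;> simp [hw]
  rw [spinVector, spinVector, hcomp]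
  exact MinusculeSystem.map_orbit (φ : L →ₗ[ℚ] L') (fun j m => by simp) w

theorem spinVector_empty : spinVector E ∅ = E 9 := by
  rw [spinVector, MinusculeSystem.orbit_of_lowest (fun j => ?_), if_pos rfl]
  change spinWeight ∅ j ≠ 1
  rw [spinWeight_empty]
  split_ifs <;> decide

theorem lie_spinVector (hE : ∀ i j, serreElement E11M E i j = 0) (j : Fin 10)
    (w : Finset (Fin 10)) :
    ⁅E (spinNode j), spinVector E w⁆ =
      if spinWeight w j = -1 then spinVector E (spinReflect j w) else 0 := by
  have had (i j : Fin 10) : serreElement (CartanMatrix.D 10)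
      (fun j => LieAlgebra.ad ℚ L (E (spinNode j))) i j = 0 := by
    rw [← E11M_submatrix_spinNode]
    exact (map_serreElement (LieAlgebra.ad ℚ L) E11M E (spinNode i) (spinNode j)).symm.trans
      (by rw [hE, map_zero])
  have hnine (j : Fin 10) : ⁅E (spinNode j), E 9⁆ = 0 ∨
      spinWeight ∅ j = -1 ∧ ⁅E (spinNode j), ⁅E (spinNode j), E 9⁆⁆ = 0 := by
    have := hE (spinNode j) 9
    rw [serreElement, E11M_spinNode_nine, spinWeight_empty] at this
    rw [spinWeight_empty]
    split_ifs at this ⊢ with hj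
    · exact Or.inr ⟨rfl, by simpa using this⟩
    · exact Or.inl (by simpa using this)
  refine (spinSystem.raise_orbit (v := fun w => if w = ∅ then E 9 else 0) had
    (fun b _ k hk => ?_) (fun b _ k => ?_) w j).trans (by congr)
  · rcases eq_or_ne b ∅ with rfl | hb
    · simpa using (hnine k).resolve_right fun h => hk h.1
    · simp [hb]
  · rcases eq_or_ne b ∅ with rfl | hb
    · rcases hnine k with h | h <;> simp [h]
    · simp [hb]

theorem spinVector_induction {p : Finset (Fin 10) → L → Prop} (hempty : p ∅ (E 9))
    (hnine : p {9} 0) (hraise : ∀ w j, spinWeight w j = -1 → p w (spinVector E w) →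
      p (spinReflect j w) ⁅E (spinNode j), spinVector E w⁆) (w : Finset (Fin 10)) :
    p w (spinVector E w) := by
  refine spinSystem.orbit_induction (fun b hb => ?_) hraise w
  rcases eq_empty_or_eq_singleton_nine_of_spinWeight_ne_one hb with rfl | rfl
  · rwa [if_pos rfl]
  · rwa [if_neg (Finset.singleton_ne_empty 9)]

theorem spinVector_eq_zero {w : Finset (Fin 10)} (hw : Odd w.card) : spinVector E w = 0 := by
  refine spinVector_induction (p := fun w m => Odd w.card → m = 0) (by simp) (by simp)
    (fun w j _ ih hodd => ?_) w hw
  rw [ih ((odd_card_spinReflect j w).1 hodd), lie_zero]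

theorem lie_spinVector_empty (hE : ∀ i j, serreElement E11M E i j = 0) :
    ⁅spinVector E ∅, spinVector E {8, 9}⁆ = 0 := by
  have h89 : spinVector E {8, 9} = ⁅E 8, E 9⁆ := by
    have := lie_spinVector hE 9 ∅
    rw [spinVector_empty, spinWeight_empty, if_pos rfl, if_pos rfl] at this
    exact this.symm
  have h : ⁅E 9, ⁅E 9, E 8⁆⁆ = 0 := by simpa [serreElement, E11M] using hE 9 8
  rw [spinVector_empty, h89, ← lie_skew (E 8), lie_neg, h, neg_zero]

/-- The product of the chirality operators of the odd modes. It pairs the states `w` and `wᶜ` of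
the spin representations invariantly. -/
def spinSign (w : Finset (Fin 10)) : ℚ := walsh {1, 3, 5, 7, 9} w

theorem spinSign_spinReflect (j : Fin 10) (w : Finset (Fin 10)) :
    spinSign (spinReflect j w) = -spinSign w := by
  have hmodes : ({1, 3, 5, 7, 9} ∩ rootModes j : Finset (Fin 10)).card = 1 := by
    revert j
    decide
  rw [spinSign, spinReflect, walsh_symmDiff, walsh.eq_1 _ (rootModes j), hmodes, pow_one,
    mul_neg_one, spinSign]

theorem spinSign_compl (w : Finset (Fin 10)) : spinSign wᶜ = -spinSign w := by
  have hcard : ({1, 3, 5, 7, 9} : Finset (Fin 10)).card = 5 := rfl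
  rw [spinSign, walsh_compl, hcard, spinSign]
  ring

/-- The root of `E11` that is studied. -/
def firstNonaffineRoot : Fin 11 → ℤ := ![1, 2, 3, 4, 5, 6, 7, 8, 5, 2, 4]

theorem mulVec_firstNonaffineRoot_spinNode :
    ∀ j, E11M.mulVec firstNonaffineRoot (spinNode j) = 0 := by decide

theorem exists_spinVector_mem_rootSpace {w : Finset (Fin 10)} (hw : spinVector (gE E11M) w ≠ 0) :
    ∃ n : Fin 11 → ℤ, spinVector (gE E11M) w ∈ rootSpace E11M n ∧ n 9 = 1 ∧
      ∀ j, E11M.mulVec n (spinNode j) = spinWeight w j := by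
  refine spinVector_induction (p := fun w m => m ≠ 0 → ∃ n : Fin 11 → ℤ, m ∈ rootSpace E11M n ∧
    n 9 = 1 ∧ ∀ j, E11M.mulVec n (spinNode j) = spinWeight w j)
    (fun _ => ⟨Pi.single 9 1, gE_mem_rootSpace 9, by simp, by simp [E11M_spinNode_nine]⟩)
    (by simp) (fun w j hwt ih hne => ?_) w hw
  obtain ⟨n, hn, hn9, hmulVec⟩ := ih fun h => hne (by rw [h, lie_zero])
  refine ⟨Pi.single (spinNode j) 1 + n, lie_mem_rootSpace_add (gE_mem_rootSpace _) hn,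
    ?_, fun i => ?_⟩
  · rw [Pi.add_apply, hn9, Pi.single_eq_of_ne (spinNode_ne_nine j).symm, zero_add]
  · have hsub : E11M (spinNode i) (spinNode j) = CartanMatrix.D 10 i j :=
      congrFun (congrFun E11M_submatrix_spinNode i) j
    rw [spinWeight_spinReflect (by omega), hwt, Matrix.mulVec_add, Pi.add_apply, hmulVec]
    simp [hsub, add_comm]

theorem lie_spinVector_mem_rootSpace (w : Finset (Fin 10)) :
    ⁅spinVector (gE E11M) w, spinVector (gE E11M) wᶜ⁆ ∈ rootSpace E11M firstNonaffineRoot := by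
  by_cases hne : spinVector (gE E11M) w = 0 ∨ spinVector (gE E11M) wᶜ = 0
  · rcases hne with h | h <;> simp [h]
  push Not at hne
  obtain ⟨n, hn, hn9, hwt⟩ := exists_spinVector_mem_rootSpace hne.1
  obtain ⟨m, hm, hm9, hwt'⟩ := exists_spinVector_mem_rootSpace hne.2
  have hroot : n + m - firstNonaffineRoot = 0 := by
    refine eq_zero_of_mulVec_E11M_eq_zero (fun i hi => ?_) (Or.inl ?_)
    · obtain ⟨j, rfl⟩ := exists_spinNode_eq hi
      simp [Matrix.mulVec_sub, Matrix.mulVec_add, hwt, hwt', spinWeight_compl,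
        mulVec_firstNonaffineRoot_spinNode]
    · simp [hn9, hm9, firstNonaffineRoot]
  rw [← sub_eq_zero.1 hroot]
  exact lie_mem_rootSpace_add hn hm

theorem eq_compl_of_lie_spinVector_mem_rootSpace {w w' : Finset (Fin 10)}
    (hne : ⁅spinVector (gE E11M) w, spinVector (gE E11M) w'⁆ ≠ 0)
    (hmem : ⁅spinVector (gE E11M) w, spinVector (gE E11M) w'⁆ ∈
      rootSpace E11M firstNonaffineRoot) : w' = wᶜ := by
  have hw : spinVector (gE E11M) w ≠ 0 := fun h => hne (by rw [h, zero_lie])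
  have hw' : spinVector (gE E11M) w' ≠ 0 := fun h => hne (by rw [h, lie_zero])
  obtain ⟨n, hn, -, hwt⟩ := exists_spinVector_mem_rootSpace hw
  obtain ⟨m, hm, -, hwt'⟩ := exists_spinVector_mem_rootSpace hw'
  have hroot : n + m = firstNonaffineRoot :=
    eq_of_mem_rootSpace mulVec_E11M_injective hne (lie_mem_rootSpace_add hn hm) hmem
  refine spinWeight_injective (funext fun j => ?_)
  have h := mulVec_firstNonaffineRoot_spinNode j
  rw [← hroot, Matrix.mulVec_add, Pi.add_apply, hwt, hwt'] at h
  rw [spinWeight_compl]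
  linarith

end SpinVector

section LevelTwo

theorem lie_mem_of_mem_span {R L M : Type*} [CommRing R] [LieRing L] [LieAlgebra R L]
    [AddCommGroup M] [Module R M] [LieRingModule L M] [LieModule R L M] {N : Submodule R M}
    {S : Set M} {x : L} (h : ∀ s ∈ S, ⁅x, s⁆ ∈ N) {y : M} (hy : y ∈ Submodule.span R S) :
    ⁅x, y⁆ ∈ N :=
  (Submodule.span_le (p := N.comap (LieModule.toEnd R L M x))).2 h hy

variable {L : Type*} [LieRing L] [LieAlgebra ℚ L] {E : Fin 11 → L}

theorem lie_mem_span_spinVector (hE : ∀ i j, serreElement E11M E i j = 0) (j : Fin 10) :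
    E (spinNode j) ∈ lieStabilizer L (Submodule.span ℚ (Set.range (spinVector E))) := by
  refine mem_lieStabilizer.2 fun y => lie_mem_of_mem_span ?_
  rintro _ ⟨w, rfl⟩
  rw [lie_spinVector hE]
  split_ifs
  · exact Submodule.subset_span ⟨_, rfl⟩
  · exact Submodule.zero_mem _

theorem lieWord_mem_lieStabilizer_span_spinVector (hE : ∀ i j, serreElement E11M E i j = 0)
    {l : List (Fin 11)} (hl : l.count 9 = 0) :
    lieWord E l ∈ lieStabilizer L (Submodule.span ℚ (Set.range (spinVector E))) := by
  induction l with
  | nil => exact LieSubalgebra.zero_mem _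
  | cons i l ih =>
    have hi : i ≠ 9 := by rintro rfl; simp at hl
    obtain ⟨j, rfl⟩ := exists_spinNode_eq hi
    rw [List.count_cons_of_ne hi] at hl
    rcases eq_or_ne l [] with rfl | hne
    · exact lie_mem_span_spinVector hE j
    · rw [lieWord_cons E _ hne]
      exact LieSubalgebra.lie_mem _ (lie_mem_span_spinVector hE j) (ih hl)

theorem lieWord_mem_span_spinVector (hE : ∀ i j, serreElement E11M E i j = 0)
    {l : List (Fin 11)} (hl : l.count 9 = 1) :
    lieWord E l ∈ Submodule.span ℚ (Set.range (spinVector E)) := by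
  have hnine : E 9 ∈ Submodule.span ℚ (Set.range (spinVector E)) :=
    Submodule.subset_span ⟨∅, spinVector_empty⟩
  induction l with
  | nil => simp at hl
  | cons i l ih =>
    rcases eq_or_ne l [] with rfl | hne
    · obtain rfl : i = 9 := by simpa [List.count_singleton] using hl
      exact hnine
    rw [lieWord_cons E _ hne]
    rcases eq_or_ne i 9 with rfl | hi
    · rw [List.count_cons_self] at hl
      rw [← lie_skew]
      exact Submodule.neg_mem _ (mem_lieStabilizer.1
        (lieWord_mem_lieStabilizer_span_spinVector hE (Nat.succ.inj hl)) _ hnine)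
    · obtain ⟨j, rfl⟩ := exists_spinNode_eq hi
      rw [List.count_cons_of_ne hi] at hl
      exact mem_lieStabilizer.1 (lie_mem_span_spinVector hE j) _ (ih hl)

variable (E) in
/-- The brackets of two level one vectors. -/
def levelTwoSpan : Submodule ℚ L :=
  Submodule.span ℚ (Set.range fun p : Finset (Fin 10) × Finset (Fin 10) =>
    ⁅spinVector E p.1, spinVector E p.2⁆)

theorem lie_spinVector_mem_levelTwoSpan (w : Finset (Fin 10)) {y : L}
    (hy : y ∈ Submodule.span ℚ (Set.range (spinVector E))) :
    ⁅spinVector E w, y⁆ ∈ levelTwoSpan E := by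
  refine lie_mem_of_mem_span ?_ hy
  rintro _ ⟨w', rfl⟩
  exact Submodule.subset_span ⟨(w, w'), rfl⟩

theorem lie_mem_levelTwoSpan (hE : ∀ i j, serreElement E11M E i j = 0) (j : Fin 10) :
    E (spinNode j) ∈ lieStabilizer L (levelTwoSpan E) := by
  refine mem_lieStabilizer.2 fun y => lie_mem_of_mem_span ?_
  rintro _ ⟨⟨w, w'⟩, rfl⟩
  have hmem (w) := mem_lieStabilizer.1 (lie_mem_span_spinVector hE j) _
    (Submodule.subset_span ⟨w, rfl⟩)
  rw [leibniz_lie, ← lie_skew]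
  exact Submodule.add_mem _ (Submodule.neg_mem _ (lie_spinVector_mem_levelTwoSpan w' (hmem w)))
    (lie_spinVector_mem_levelTwoSpan w (hmem w'))

theorem lieWord_mem_levelTwoSpan (hE : ∀ i j, serreElement E11M E i j = 0)
    {l : List (Fin 11)} (hl : l.count 9 = 2) : lieWord E l ∈ levelTwoSpan E := by
  induction l with
  | nil => simp at hl
  | cons i l ih =>
    have hne : l ≠ [] := by
      rintro rfl
      have := List.count_le_length (a := 9) (l := [i])
      simp_all
    rw [lieWord_cons E _ hne]
    rcases eq_or_ne i 9 with rfl | hi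
    · rw [List.count_cons_self] at hl
      rw [← spinVector_empty (E := E)]
      exact lie_spinVector_mem_levelTwoSpan ∅ (lieWord_mem_span_spinVector hE (Nat.succ.inj hl))
    · obtain ⟨j, rfl⟩ := exists_spinNode_eq hi
      rw [List.count_cons_of_ne hi] at hl
      exact mem_lieStabilizer.1 (lie_mem_levelTwoSpan hE j) _ (ih hl)

theorem rootSpace_firstNonaffineRoot_le :
    rootSpace E11M firstNonaffineRoot ≤ Submodule.span ℚ (Set.range fun w =>
      ⁅spinVector (gE E11M) w, spinVector (gE E11M) wᶜ⁆) := by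
  intro x hx
  have hlevel : x ∈ levelTwoSpan (gE E11M) := by
    refine Submodule.span_le.2 ?_
      (rootSpace_le_span_lieWord mulVec_E11M_injective ⟨0, by decide⟩ hx)
    rintro _ ⟨l, hl, rfl⟩
    have h9 : (l.count 9 : ℤ) = 2 := congrFun hl 9
    exact lieWord_mem_levelTwoSpan (serreElement_gE E11M) (by exact_mod_cast h9)
  refine Submodule.span_le.2 ?_ (mem_span_inter_rootSpace ?_ hlevel hx)
  · rintro _ ⟨⟨⟨w, w'⟩, rfl⟩, hmem⟩
    by_cases hne : ⁅spinVector (gE E11M) w, spinVector (gE E11M) w'⁆ = 0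
    · simp [hne]
    · obtain rfl := eq_compl_of_lie_spinVector_mem_rootSpace hne hmem
      exact Submodule.subset_span ⟨w, rfl⟩
  · rintro _ ⟨⟨w, w'⟩, rfl⟩
    by_cases hw : spinVector (gE E11M) w = 0
    · exact ⟨0, by simp [hw]⟩
    by_cases hw' : spinVector (gE E11M) w' = 0
    · exact ⟨0, by simp [hw']⟩
    obtain ⟨n, hn, -⟩ := exists_spinVector_mem_rootSpace hw
    obtain ⟨m, hm, -⟩ := exists_spinVector_mem_rootSpace hw'
    exact ⟨n + m, lie_mem_rootSpace_add hn hm⟩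

end LevelTwo

section CanonicalAnticommutation

attribute [local instance] LieRing.ofAssociativeRing LieAlgebra.ofAssociativeAlgebra

/-- The canonical anticommutation relations between annihilators `c` and creators `d`. -/
structure IsCAR {ι R : Type*} [DecidableEq ι] [Ring R] (c d : ι → R) : Prop where
  c_mul_c : ∀ i j, c i * c j = -(c j * c i)
  d_mul_d : ∀ i j, d i * d j = -(d j * d i)
  c_mul_d : ∀ i j, c i * d j = (if i = j then 1 else 0) - d j * c i

/-- The chirality operator `1 - 2 d c` of a mode. -/
def chirality {ι R : Type*} [Ring R] (c d : ι → R) (i : ι) : R := 1 - 2 * (d i * c i)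

namespace IsCAR

variable {ι R : Type*} [DecidableEq ι] [Ring R] {c d : ι → R} (H : IsCAR c d)
include H

theorem c_mul_d_self (i : ι) : c i * d i = 1 - d i * c i := by
  rw [H.c_mul_d, if_pos rfl]

theorem c_mul_d_of_ne {i j : ι} (h : i ≠ j) : c i * d j = -(d j * c i) := by
  rw [H.c_mul_d, if_neg h, zero_sub]

theorem d_mul_c_of_ne {i j : ι} (h : i ≠ j) : d i * c j = -(c j * d i) := by
  rw [H.c_mul_d_of_ne h.symm, neg_neg]

theorem commute_d_mul_d_c {a b k : ι} (ha : k ≠ a) (hb : k ≠ b) : Commute (d a * d b) (c k) := by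
  rw [Commute, SemiconjBy, mul_assoc, H.d_mul_c_of_ne hb.symm, mul_neg, ← mul_assoc,
    H.d_mul_c_of_ne ha.symm, neg_mul, neg_neg, mul_assoc]

theorem commute_d_mul_d_d (a b k : ι) : Commute (d a * d b) (d k) := by
  rw [Commute, SemiconjBy, mul_assoc, H.d_mul_d b k, mul_neg, ← mul_assoc, H.d_mul_d a k, neg_mul,
    neg_neg, mul_assoc]

theorem commute_d_mul_d_chirality {a b k : ι} (ha : k ≠ a) (hb : k ≠ b) :
    Commute (d a * d b) (chirality c d k) :=
  (Commute.one_right _).sub_right ((Commute.ofNat_right _ 2).mul_right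
    ((H.commute_d_mul_d_d a b k).mul_right (H.commute_d_mul_d_c ha hb)))

theorem two_mul_lie_d_mul_d_c_mul_c {a b : ι} (hab : a ≠ b) :
    2 * ⁅d a * d b, c a * c b⁆ = chirality c d a + chirality c d b := by
  have hd : d a * d b * (c a * c b) = -(d a * c a * (d b * c b)) := by
    rw [mul_assoc, ← mul_assoc (d b), H.d_mul_c_of_ne hab.symm]
    noncomm_ring
  have hc : c a * c b * (d a * d b) = -((1 - d a * c a) * (1 - d b * c b)) := by
    rw [mul_assoc, ← mul_assoc (c b), H.c_mul_d_of_ne hab.symm, ← H.c_mul_d_self,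
      ← H.c_mul_d_self]
    noncomm_ring
  rw [Ring.lie_def, hd, hc, chirality, chirality]
  noncomm_ring

theorem lie_d_mul_c_d_mul_d {i j k : ι} (hkj : k ≠ j) :
    ⁅d i * c j, d j * d k⁆ = d i * d k := by
  have hleft : d i * c j * (d j * d k) = d i * d k - d i * d j * (c j * d k) := by
    rw [mul_assoc, ← mul_assoc (c j), H.c_mul_d_self]
    noncomm_ring
  have hright : d j * d k * (d i * c j) = -(d i * d j * (c j * d k)) := by
    rw [← mul_assoc, (H.commute_d_mul_d_d j k i).eq, mul_assoc, mul_assoc, H.d_mul_c_of_ne hkj]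
    noncomm_ring
  rw [Ring.lie_def, hleft, hright]
  noncomm_ring

variable [Algebra ℚ R] {K : Submodule ℚ R}

theorem mul_chirality_add_chirality_mul_mem {a b : ι} (hab : a ≠ b)
    (hK : d a * d b ∈ lieStabilizer R K) {I l : List ι} (hI : a ∉ I ∧ b ∉ I) (hl : a ∉ l ∧ b ∉ l)
    (h : (I.map (chirality c d)).prod * ((a :: b :: l).map c).prod ∈ K) :
    (I.map (chirality c d)).prod * ((chirality c d a + chirality c d b) * (l.map c).prod) ∈ K := by
  have hP : Commute (d a * d b) (I.map (chirality c d)).prod := by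
    refine Commute.list_prod_right _ _ fun x hx => ?_
    obtain ⟨k, hk, rfl⟩ := List.mem_map.1 hx
    exact H.commute_d_mul_d_chirality (ne_of_mem_of_not_mem hk hI.1) (ne_of_mem_of_not_mem hk hI.2)
  have hC : Commute (d a * d b) (l.map c).prod := by
    refine Commute.list_prod_right _ _ fun x hx => ?_
    obtain ⟨k, hk, rfl⟩ := List.mem_map.1 hx
    exact H.commute_d_mul_d_c (ne_of_mem_of_not_mem hk hl.1) (ne_of_mem_of_not_mem hk hl.2)
  have hlie : ⁅d a * d b, (I.map (chirality c d)).prod * ((a :: b :: l).map c).prod⁆ =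
      (I.map (chirality c d)).prod * (⁅d a * d b, c a * c b⁆ * (l.map c).prod) := by
    rw [Ring.lie_def, Ring.lie_def, List.map_cons, List.map_cons, List.prod_cons, List.prod_cons,
      ← mul_assoc (c a), ← mul_assoc (d a * d b), hP.eq, sub_mul, mul_sub,
      mul_assoc (c a * c b) (d a * d b), hC.eq]
    simp only [mul_assoc]
  rw [← H.two_mul_lie_d_mul_d_c_mul_c hab, two_mul, add_mul, mul_add, ← hlie]
  exact K.add_mem (hK _ h) (hK _ h)

theorem chirality_prod_mul_mem [Fintype ι] (hK : ∀ a b, a ≠ b → d a * d b ∈ lieStabilizer R K)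
    {m : ℕ} (hm : 2 * m < Fintype.card ι)
    (hc : ∀ l : List ι, l.Nodup → l.length = 2 * m → (l.map c).prod ∈ K) {I l : List ι}
    (hnodup : (I ++ l).Nodup) (hlen : 2 * I.length + l.length = 2 * m) :
    (I.map (chirality c d)).prod * (l.map c).prod ∈ K := by
  induction I using List.reverseRecOn generalizing l with
  | nil => simpa using hc l (by simpa using hnodup) (by simpa using hlen)
  | append_singleton I a ih =>
    simp only [List.length_append, List.length_singleton] at hlen
    have hpair : ∀ {x y : ι}, x ≠ y → x ∉ I ++ l → y ∉ I ++ l →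
        (I.map (chirality c d)).prod *
          ((chirality c d x + chirality c d y) * (l.map c).prod) ∈ K := by
      intro x y hxy hx hy
      refine H.mul_chirality_add_chirality_mul_mem hxy (hK x y hxy) ?_ ?_
        (ih (List.nodup_middle.2 (List.nodup_cons.2 ⟨?_, List.nodup_middle.2 ?_⟩)) ?_) <;>
        grind
    obtain ⟨b, b', hb, hb', hbb'⟩ : ∃ b b', b ∉ I ++ [a] ++ l ∧ b' ∉ I ++ [a] ++ l ∧ b ≠ b' := by
      have hcard := (I ++ [a] ++ l).toFinset_card_le
      have := Finset.card_compl_add_card (I ++ [a] ++ l).toFinset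
      simp only [List.length_append, List.length_singleton] at hcard
      obtain ⟨b, hb, b', hb', hne⟩ :=
        Finset.one_lt_card.1 (by omega : 1 < (I ++ [a] ++ l).toFinsetᶜ.card)
      exact ⟨b, b', by simpa [and_left_comm] using hb, by simpa [and_left_comm] using hb', hne⟩
    have key := K.smul_mem (1 / 2 : ℚ) (K.sub_mem (K.add_mem
      (hpair (x := a) (y := b) (by grind) (by grind) (by grind))
      (hpair (x := a) (y := b') (by grind) (by grind) (by grind)))
      (hpair hbb' (by grind) (by grind)))
    convert key using 1
    simp only [List.map_append, List.prod_append, List.map_singleton, List.prod_singleton, add_mul,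
      mul_add, mul_assoc]
    module

end IsCAR

theorem IsCAR.d_mul_d_mem_of_lt {𝕜 R : Type*} [CommRing 𝕜] [Ring R] [Algebra 𝕜 R] {n : ℕ}
    {c d : Fin (n + 2) → R} (H : IsCAR c d) {S : LieSubalgebra 𝕜 R}
    (hS : ∀ j : Fin (n + 1), d j.castSucc * c j.succ ∈ S)
    (hlast : d (Fin.last n).castSucc * d (Fin.last (n + 1)) ∈ S) {a b : Fin (n + 2)} (hab : a < b) :
    d a * d b ∈ S := by
  have hstep : ∀ (j : Fin (n + 1)) (k : Fin (n + 2)), k ≠ j.succ → d j.succ * d k ∈ S →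
      d j.castSucc * d k ∈ S := fun j k hk h => by
    rw [← H.lie_d_mul_c_d_mul_d hk]
    exact S.lie_mem (hS j) h
  induction b using Fin.reverseInduction with
  | last =>
    obtain ⟨a, rfl⟩ := Fin.exists_castSucc_eq.2 hab.ne
    clear hab
    induction a using Fin.reverseInduction with
    | last => exact hlast
    | cast a ih =>
      exact hstep _ _ (by rw [Ne, Fin.ext_iff, Fin.val_last, Fin.val_succ, Fin.val_castSucc]; omega)
        (by simpa using ih)
  | cast b ih =>
    have hlt : a < b.succ := hab.trans Fin.castSucc_lt_succ
    have := ih hlt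
    rw [H.d_mul_d, neg_mem_iff] at this ⊢
    exact hstep b a hlt.ne this

theorem IsCAR.d_mul_d_mem {𝕜 R : Type*} [CommRing 𝕜] [Ring R] [Algebra 𝕜 R] {n : ℕ}
    {c d : Fin (n + 2) → R} (H : IsCAR c d) {S : LieSubalgebra 𝕜 R}
    (hS : ∀ j : Fin (n + 1), d j.castSucc * c j.succ ∈ S)
    (hlast : d (Fin.last n).castSucc * d (Fin.last (n + 1)) ∈ S) {a b : Fin (n + 2)} (hab : a ≠ b) :
    d a * d b ∈ S := by
  rcases hab.lt_or_gt with h | h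
  · exact H.d_mul_d_mem_of_lt hS hlast h
  · rw [H.d_mul_d, neg_mem_iff]
    exact H.d_mul_d_mem_of_lt hS hlast h

section Fock

variable {ι : Type*} [LinearOrder ι] [LocallyFiniteOrderBot ι]

/-- The operator on Fock space that flips the occupation of the mode `k` if that mode is occupied
(`b = true`) or empty (`b = false`), with the Jordan–Wigner sign. -/
def ladder (b : Bool) (k : ι) : Module.End ℚ (Finset ι →₀ ℚ) :=
  Finsupp.linearCombination ℚ fun w =>
    if (k ∈ w ↔ b) then Finsupp.single (symmDiff w {k}) (walsh (Finset.Iio k) w) else 0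

/-- The annihilator of a mode. -/
abbrev annihilator (k : ι) : Module.End ℚ (Finset ι →₀ ℚ) := ladder true k

/-- The creator of a mode. -/
abbrev creator (k : ι) : Module.End ℚ (Finset ι →₀ ℚ) := ladder false k

theorem ladder_single (b : Bool) (k : ι) (w : Finset ι) (r : ℚ) :
    ladder b k (Finsupp.single w r) =
      if (k ∈ w ↔ b) then Finsupp.single (symmDiff w {k}) (walsh (Finset.Iio k) w * r) else 0 := by
  simp [ladder, mul_comm]

theorem ladder_mul_ladder_of_lt {i j : ι} (h : i < j) (b b' : Bool) :
    ladder b i * ladder b' j = -(ladder b' j * ladder b i) := by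
  ext w : 2
  have hi : i ∈ symmDiff w {j} ↔ i ∈ w := by simp [Finset.mem_symmDiff, h.ne]
  have hj : j ∈ symmDiff w {i} ↔ j ∈ w := by simp [Finset.mem_symmDiff, h.ne']
  have hwi : walsh (Finset.Iio i) {j} = 1 := by simp [walsh, h.not_gt]
  have hwj : walsh (Finset.Iio j) {i} = -1 := by simp [walsh, h]
  by_cases hb : i ∈ w ↔ b <;> by_cases hb' : j ∈ w ↔ b' <;>
    simp [ladder_single, hb, hb', hi, hj, walsh_symmDiff, hwi, hwj, symmDiff_right_comm w {i} {j},
      mul_comm]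

theorem ladder_mul_self (b : Bool) (k : ι) : ladder b k * ladder b k = 0 := by
  ext w : 2
  by_cases hb : k ∈ w ↔ b <;> simp [ladder_single, hb, Finset.mem_symmDiff]

theorem annihilator_mul_creator_self (k : ι) :
    annihilator k * creator k = 1 - creator k * annihilator k := by
  ext w : 2
  have hk : walsh (Finset.Iio k) {k} = 1 := by simp [walsh]
  by_cases hw : k ∈ w <;>
    simp [ladder_single, hw, Finset.mem_symmDiff, walsh_symmDiff, walsh_mul_self, hk]

theorem ladder_mul_ladder {b b' : Bool} {i j : ι} (h : i = j → b = b') :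
    ladder b i * ladder b' j = -(ladder b' j * ladder b i) := by
  rcases lt_trichotomy i j with hij | rfl | hij
  · exact ladder_mul_ladder_of_lt hij b b'
  · rw [h rfl, ladder_mul_self, neg_zero]
  · rw [ladder_mul_ladder_of_lt hij b' b, neg_neg]

theorem isCAR_annihilator_creator : IsCAR (annihilator (ι := ι)) creator where
  c_mul_c _ _ := ladder_mul_ladder fun _ => rfl
  d_mul_d _ _ := ladder_mul_ladder fun _ => rfl
  c_mul_d i j := by
    split_ifs with hij
    · rw [hij, annihilator_mul_creator_self]
    · rw [zero_sub, ladder_mul_ladder fun h => absurd h hij]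

theorem chirality_single (k : ι) (w : Finset ι) (r : ℚ) :
    chirality annihilator creator k (Finsupp.single w r) =
      Finsupp.single w (walsh {k} w * r) := by
  have hnumber : creator k (annihilator k (Finsupp.single w r)) =
      if k ∈ w then Finsupp.single w r else 0 := by
    have hk : walsh (Finset.Iio k) {k} = 1 := by simp [walsh]
    have hsq := walsh_mul_self (Finset.Iio k) w
    by_cases hw : k ∈ w <;>
      simp [ladder_single, hw, Finset.mem_symmDiff, walsh_symmDiff, hk, ← mul_assoc, hsq,
        -Finsupp.single_mul]
  rw [chirality, two_mul, LinearMap.sub_apply, LinearMap.add_apply, Module.End.one_apply,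
    Module.End.mul_apply, hnumber]
  by_cases hw : k ∈ w <;> simp [hw, walsh]

theorem chirality_prod_single {I : List ι} (hI : I.Nodup) (w : Finset ι) (r : ℚ) :
    (I.map (chirality annihilator creator)).prod (Finsupp.single w r) =
      Finsupp.single w (walsh I.toFinset w * r) := by
  induction I with
  | nil => simp [walsh_empty]
  | cons k I ih =>
    obtain ⟨hk, hI⟩ := List.nodup_cons.1 hI
    have hinsert : insert k I.toFinset = symmDiff {k} I.toFinset := by
      ext i
      by_cases hi : i = k <;> simp_all [Finset.mem_symmDiff]
    rw [List.map_cons, List.prod_cons, Module.End.mul_apply, ih hI, chirality_single,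
      List.toFinset_cons, hinsert, ← walsh_mul_walsh, mul_assoc]

theorem exists_annihilator_prod_single {l : List ι} (hl : l.Nodup) (w : Finset ι) :
    ∃ r, (l.map annihilator).prod (Finsupp.single w 1) =
      if l.toFinset ⊆ w then Finsupp.single (w \ l.toFinset) r else 0 := by
  induction l with
  | nil => exact ⟨1, by simp⟩
  | cons k l ih =>
    obtain ⟨hk, hl⟩ := List.nodup_cons.1 hl
    obtain ⟨r, hr⟩ := ih hl
    refine ⟨walsh (Finset.Iio k) (w \ l.toFinset) * r, ?_⟩
    have hsdiff : k ∈ w → symmDiff (w \ l.toFinset) {k} = w \ insert k l.toFinset := by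
      intro hkw
      ext i
      by_cases hi : i = k <;> simp_all [Finset.mem_symmDiff]
    rw [List.map_cons, List.prod_cons, Module.End.mul_apply, hr, List.toFinset_cons]
    by_cases hkw : k ∈ w <;> by_cases hlw : l.toFinset ⊆ w <;>
      simp [ladder_single, Finset.insert_subset_iff, hkw, hlw, hk, hsdiff]

theorem creator_mul_ladder_single {i j : ι} (hij : i ⋖ j) (b : Bool) (w : Finset ι) (r : ℚ) :
    creator i (ladder b j (Finsupp.single w r)) =
      if i ∉ w ∧ (j ∈ w ↔ b) then Finsupp.single (symmDiff w {i, j}) r else 0 := by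
  have hi : i ∈ symmDiff w {j} ↔ i ∈ w := by simp [Finset.mem_symmDiff, hij.lt.ne]
  have hpair : symmDiff (symmDiff w {j}) {i} = symmDiff w {i, j} := by
    ext k
    by_cases hki : k = i <;> by_cases hkj : k = j <;> simp_all [Finset.mem_symmDiff]
  have hsign : i ∉ w → walsh (Finset.Iio i) (symmDiff w {j}) * walsh (Finset.Iio j) w = 1 := by
    intro hiw
    have hIio : symmDiff (Finset.Iio i) (Finset.Iio j) = {i} := by
      ext k
      simp only [Finset.mem_symmDiff, Finset.mem_Iio, Finset.mem_singleton, hij.lt_iff_le_left]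
      grind
    have hj : walsh (Finset.Iio i) {j} = 1 := by simp [walsh, hij.lt.not_gt]
    rw [walsh_symmDiff, hj, mul_one, walsh_mul_walsh, hIio]
    simp [walsh, hiw]
  by_cases hiw : i ∈ w <;> by_cases hjw : j ∈ w ↔ b <;>
    simp [ladder_single, hiw, hjw, hi, hpair, ← mul_assoc, hsign, -Finsupp.single_mul]

end Fock

theorem creator_mul_annihilator_eq_raise (j : Fin 9) :
    creator j.castSucc * annihilator j.succ = spinSystem.raise j.castSucc := by
  ext w : 2
  have hj : j.castSucc + 1 = j.succ := by simp
  have hne : j.castSucc ≠ 9 := j.castSucc_ne_last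
  have hwt : spinWeight w j.castSucc = -1 ↔ j.castSucc ∉ w ∧ j.succ ∈ w := by
    rw [spinWeight_of_ne hne, hj]
    grind [occupation]
  have hmodes : spinReflect j.castSucc w = symmDiff w {j.castSucc, j.succ} := by
    rw [spinReflect, rootModes, if_neg hne, hj]
  simp [creator_mul_ladder_single, Fin.covBy_iff, raise_spinSystem_single, hwt, hmodes]

theorem creator_mul_creator_eq_raise : creator 8 * creator 9 = spinSystem.raise 9 := by
  ext w : 2
  have hwt : spinWeight w 9 = -1 ↔ 8 ∉ w ∧ 9 ∉ w := by
    rw [spinWeight_nine]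
    grind [occupation]
  simp [creator_mul_ladder_single, Fin.covBy_iff, raise_spinSystem_single, hwt,
    spinReflect, rootModes]

end CanonicalAnticommutation

section Relations

attribute [local instance] LieRing.ofAssociativeRing LieAlgebra.ofAssociativeAlgebra

variable {L : Type*} [LieRing L] [LieAlgebra ℚ L] {E : Fin 11 → L}

theorem involutive_spinReflect (j : Fin 10) : Function.Involutive (spinReflect j) := by
  intro w
  rw [spinReflect, spinReflect, symmDiff_symmDiff_cancel_right]

theorem spinReflect_compl (j : Fin 10) (w : Finset (Fin 10)) :
    spinReflect j wᶜ = (spinReflect j w)ᶜ := by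
  ext k
  by_cases hk : k ∈ w <;> simp [spinReflect, Finset.mem_symmDiff, hk]

theorem spinWeight_spinReflect_eq_one_iff {j : Fin 10} {w : Finset (Fin 10)} :
    spinWeight (spinReflect j w) j = 1 ↔ spinWeight w j = -1 := by
  have hflip : ∀ v, spinWeight v j ≠ 0 → spinWeight (spinReflect j v) j = -spinWeight v j :=
    fun v hv => spinSystem.wt_reflect_self hv
  refine ⟨fun h => ?_, fun h => by rw [hflip w (by omega), h, neg_neg]⟩
  rw [← involutive_spinReflect j w, hflip _ (by omega), h]

theorem lie_spinVector_of_card_eq_two (hE : ∀ i j, serreElement E11M E i j = 0)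
    {w : Finset (Fin 10)} (hw : w.card = 2) : ⁅spinVector E ∅, spinVector E w⁆ = 0 := by
  refine spinVector_induction (p := fun w m => w.card = 2 → ⁅spinVector E ∅, m⁆ = 0)
    (by simp) (by simp) (fun w j hwt ih hcard => ?_) w hw
  rcases eq_or_ne j 9 with rfl | hj
  · have hw : 8 ∉ w ∧ 9 ∉ w := by
      rw [spinWeight_nine] at hwt
      grind [occupation]
    have hinsert : spinReflect 9 w = insert 8 (insert 9 w) := by
      ext k
      grind [spinReflect, rootModes, Finset.mem_symmDiff]
    obtain rfl : w = ∅ := by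
      rw [hinsert, Finset.card_insert_of_notMem (by simp [hw.1]),
        Finset.card_insert_of_notMem hw.2] at hcard
      simpa using hcard
    rw [lie_spinVector hE, if_pos hwt]
    exact lie_spinVector_empty hE
  · have hw : j ∉ w ∧ j + 1 ∈ w := by
      rw [spinWeight_of_ne hj] at hwt
      grind [occupation]
    have hinsert : spinReflect j w = insert j (w.erase (j + 1)) := by
      ext k
      grind [spinReflect, rootModes, Finset.mem_symmDiff]
    have hw2 : w.card = 2 := by
      rwa [hinsert, Finset.card_insert_of_notMem (by simp [hw.1]),
        Finset.card_erase_add_one hw.2] at hcard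
    have h0 : ⁅spinVector E ∅, E (spinNode j)⁆ = 0 := by
      rw [← lie_skew, lie_spinVector hE, spinWeight_empty, if_neg hj, if_neg (by decide), neg_zero]
    rw [leibniz_lie, h0, zero_lie, ih hw2, lie_zero, add_zero]

variable (E) in
/-- The level two vector paired with an endomorphism of Fock space: the image of the invariant
element `∑ w, spinSign w • w ⊗ wᶜ` acted on in the first factor. -/
def spinPairing : Module.End ℚ (Finset (Fin 10) →₀ ℚ) →ₗ[ℚ] L where
  toFun x := ∑ w, spinSign w •
    ⁅Finsupp.linearCombination ℚ (spinVector E) (x (Finsupp.single w 1)), spinVector E wᶜ⁆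
  map_add' x y := by simp [Finset.sum_add_distrib]
  map_smul' r x := by simp [Finset.smul_sum, smul_comm r]

theorem spinPairing_apply (x : Module.End ℚ (Finset (Fin 10) →₀ ℚ)) :
    spinPairing E x = ∑ w, spinSign w •
      ⁅Finsupp.linearCombination ℚ (spinVector E) (x (Finsupp.single w 1)), spinVector E wᶜ⁆ := rfl

theorem linearCombination_raise (hE : ∀ i j, serreElement E11M E i j = 0) (j : Fin 10)
    (v : Finset (Fin 10) →₀ ℚ) :
    Finsupp.linearCombination ℚ (spinVector E) (spinSystem.raise j v) =
      ⁅E (spinNode j), Finsupp.linearCombination ℚ (spinVector E) v⁆ := by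
  induction v using Finsupp.induction_linear with
  | zero => simp
  | add v v' hv hv' => simp [hv, hv']
  | single w r =>
    rw [raise_spinSystem_single, Finsupp.linearCombination_single, lie_smul, lie_spinVector hE]
    split_ifs
    · rw [Finsupp.linearCombination_single]
    · simp

theorem lie_spinPairing (hE : ∀ i j, serreElement E11M E i j = 0) (j : Fin 10)
    (x : Module.End ℚ (Finset (Fin 10) →₀ ℚ)) :
    ⁅E (spinNode j), spinPairing E x⁆ = spinPairing E ⁅spinSystem.raise j, x⁆ := by
  obtain ⟨σ, hσ⟩ : ∃ σ, σ = Finsupp.linearCombination ℚ (spinVector E) := ⟨_, rfl⟩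
  have hraise (v : Finset (Fin 10) →₀ ℚ) : σ (spinSystem.raise j v) = ⁅E (spinNode j), σ v⁆ := by
    rw [hσ, linearCombination_raise hE]
  have hreindex : ∑ w, spinSign w •
      ⁅σ (x (Finsupp.single w 1)), ⁅E (spinNode j), spinVector E wᶜ⁆⁆ =
      -∑ w, spinSign w • ⁅σ (x (spinSystem.raise j (Finsupp.single w 1))), spinVector E wᶜ⁆ := by
    rw [← Equiv.sum_comp (involutive_spinReflect j).toPerm,
      ← Finset.sum_neg_distrib]
    refine Finset.sum_congr rfl fun w _ => ?_
    rw [Function.Involutive.coe_toPerm, spinSign_spinReflect, lie_spinVector hE, spinWeight_compl,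
      spinReflect_compl, involutive_spinReflect, raise_spinSystem_single]
    by_cases hw : spinWeight w j = -1
    · simp [hw, spinWeight_spinReflect_eq_one_iff.2 hw]
    · have hw' : ¬ -spinWeight (spinReflect j w) j = -1 := by
        rwa [neg_inj, spinWeight_spinReflect_eq_one_iff]
      simp [hw, hw']
  simp only [spinPairing_apply, ← hσ, lie_sum, lie_smul, leibniz_lie (E (spinNode j)), smul_add,
    Finset.sum_add_distrib, hreindex, Ring.lie_def, Module.End.mul_apply, map_sub, hraise]
  rw [sub_eq_add_neg]

theorem raise_mem_lieStabilizer_ker (hE : ∀ i j, serreElement E11M E i j = 0) (j : Fin 10) :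
    spinSystem.raise j ∈ lieStabilizer _ (LinearMap.ker (spinPairing E)) := by
  refine mem_lieStabilizer.2 fun x hx => ?_
  rw [LinearMap.mem_ker] at hx ⊢
  rw [← lie_spinPairing hE, hx, lie_zero]

theorem creator_mul_creator_mem_lieStabilizer_ker (hE : ∀ i j, serreElement E11M E i j = 0)
    {a b : Fin 10} (hab : a ≠ b) :
    creator a * creator b ∈ lieStabilizer _ (LinearMap.ker (spinPairing E)) := by
  refine isCAR_annihilator_creator.d_mul_d_mem (n := 8) (fun j => ?_) ?_ hab
  · rw [creator_mul_annihilator_eq_raise]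
    exact raise_mem_lieStabilizer_ker hE _
  · exact creator_mul_creator_eq_raise ▸ raise_mem_lieStabilizer_ker hE 9

theorem annihilator_prod_mem_ker (hE : ∀ i j, serreElement E11M E i j = 0) {l : List (Fin 10)}
    (hl : l.Nodup) (hlen : l.length = 8) :
    (l.map annihilator).prod ∈ LinearMap.ker (spinPairing E) := by
  rw [LinearMap.mem_ker, spinPairing_apply]
  refine Finset.sum_eq_zero fun w _ => ?_
  obtain ⟨r, hr⟩ := exists_annihilator_prod_single hl w
  rw [hr]
  split_ifs with hlw
  · have hcard : (w \ l.toFinset).card + wᶜ.card = 2 := by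
      have hsub : (w \ l.toFinset).card + l.toFinset.card = w.card :=
        Finset.card_sdiff_add_card_eq_card hlw
      have hcompl : w.card + wᶜ.card = 10 := Finset.card_add_card_compl w
      rw [List.toFinset_card_of_nodup hl] at hsub
      omega
    suffices ⁅spinVector E (w \ l.toFinset), spinVector E wᶜ⁆ = 0 by simp [this]
    have hle : (w \ l.toFinset).card ≤ 2 := by omega
    interval_cases h : (w \ l.toFinset).card
    · rw [Finset.card_eq_zero.1 h, lie_spinVector_of_card_eq_two hE (by omega)]
    · rw [spinVector_eq_zero (by rw [h]; exact odd_one), zero_lie]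
    · rw [Finset.card_eq_zero.1 (by omega : wᶜ.card = 0), ← lie_skew,
        lie_spinVector_of_card_eq_two hE h, neg_zero]
  · simp

theorem lie_spinVector_compl_eq_zero {w : Finset (Fin 10)} (hw : Odd w.card) :
    ⁅spinVector E w, spinVector E wᶜ⁆ = 0 := by
  rw [spinVector_eq_zero hw, zero_lie]

variable (E) in
/-- The level two vectors diagonal for the chirality operators: the Walsh transform of the
brackets of complementary spin vectors. -/
def walshVector (I : Finset (Fin 10)) : L :=
  ∑ w, (walsh I w * spinSign w) • ⁅spinVector E w, spinVector E wᶜ⁆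

theorem map_walshVector {L' : Type*} [LieRing L'] [LieAlgebra ℚ L'] (φ : L →ₗ⁅ℚ⁆ L')
    (I : Finset (Fin 10)) : φ (walshVector E I) = walshVector (φ ∘ E) I := by
  simp [walshVector, map_spinVector]

theorem walshVector_eq_zero_of_card_eq_four (hE : ∀ i j, serreElement E11M E i j = 0)
    {I : Finset (Fin 10)} (hI : I.card = 4) : walshVector E I = 0 := by
  have hmem : (I.toList.map (chirality annihilator creator)).prod ∈
      LinearMap.ker (spinPairing E) := by
    have := isCAR_annihilator_creator.chirality_prod_mul_mem (m := 4) (I := I.toList) (l := [])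
      (fun a b hab => creator_mul_creator_mem_lieStabilizer_ker hE hab) (by simp)
      (fun l hl hlen => annihilator_prod_mem_ker hE hl hlen) (by simpa using I.nodup_toList)
      (by simp [hI])
    simpa using this
  rw [LinearMap.mem_ker, spinPairing_apply] at hmem
  rw [walshVector, ← hmem]
  refine Finset.sum_congr rfl fun w _ => ?_
  rw [chirality_prod_single I.nodup_toList, Finset.toList_toFinset, mul_one,
    Finsupp.linearCombination_single, smul_lie, smul_smul, mul_comm]

theorem walshVector_eq_zero_of_odd_card {I : Finset (Fin 10)} (hI : Odd I.card) :
    walshVector E I = 0 := by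
  have hneg : walshVector E I = -walshVector E I := by
    rw [walshVector, ← Finset.sum_neg_distrib,
      ← Equiv.sum_comp (Function.Involutive.toPerm _ compl_involutive)]
    refine Finset.sum_congr rfl fun w _ => ?_
    rw [Function.Involutive.coe_toPerm, walsh_compl, hI.neg_one_pow, spinSign_compl, compl_compl,
      ← lie_skew]
    module
  have htwo : (2 : ℚ) • walshVector E I = 0 := by
    rw [two_smul]
    nth_rewrite 2 [hneg]
    exact add_neg_cancel _
  simpa using htwo

theorem walshVector_compl (I : Finset (Fin 10)) : walshVector E Iᶜ = walshVector E I := by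
  refine Finset.sum_congr rfl fun w _ => ?_
  rcases Nat.even_or_odd w.card with hw | hw
  · rw [walsh_comm, walsh_compl, hw.neg_one_pow, one_mul, walsh_comm]
  · rw [lie_spinVector_compl_eq_zero hw, smul_zero, smul_zero]

theorem lie_spinVector_compl_eq_sum_walshVector (w : Finset (Fin 10)) :
    ⁅spinVector E w, spinVector E wᶜ⁆ =
      (spinSign w / 2 ^ 10) • ∑ I, walsh I w • walshVector E I := by
  have horth (v : Finset (Fin 10)) :
      ∑ I, walsh I w * walsh I v = if w = v then (2 : ℚ) ^ 10 else 0 := by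
    simp only [walsh_comm _ w, walsh_comm _ v, sum_walsh_mul_walsh, Fintype.card_fin]
  have hsq : spinSign w * spinSign w = 1 := walsh_mul_self _ w
  simp only [walshVector, Finset.smul_sum, smul_smul, ← mul_assoc]
  rw [Finset.sum_comm]
  simp only [← Finset.sum_smul, ← Finset.sum_mul, mul_assoc (_ / _), ← Finset.mul_sum, horth]
  have hcoeff (r s : ℚ) : r / 2 ^ 10 * (2 ^ 10 * s) = r * s := by ring
  simp only [ite_mul, zero_mul, mul_ite, mul_zero, ite_smul, zero_smul, Finset.sum_ite_eq,
    Finset.mem_univ, if_true, hcoeff, hsq, one_smul]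

/-- The Walsh modes `I` for which `walshVector I` is not forced to vanish, up to complement. -/
def lowModes : Finset (Finset (Fin 10)) := {I | I.card = 0 ∨ I.card = 2}

theorem card_lowModes : lowModes.card = 46 := by
  decide +kernel

theorem span_lie_spinVector_compl_le (hE : ∀ i j, serreElement E11M E i j = 0) :
    Submodule.span ℚ (Set.range fun w => ⁅spinVector E w, spinVector E wᶜ⁆) ≤
      Submodule.span ℚ (Set.range fun I : lowModes => walshVector E I) := by
  have hlow (I : Finset (Fin 10)) (hI : I.card = 0 ∨ I.card = 2) :
      walshVector E I ∈ Submodule.span ℚ (Set.range fun I : lowModes => walshVector E I) :=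
    Submodule.subset_span ⟨⟨I, by simpa [lowModes] using hI⟩, rfl⟩
  have hmem (I : Finset (Fin 10)) :
      walshVector E I ∈ Submodule.span ℚ (Set.range fun I : lowModes => walshVector E I) := by
    have hcompl : Iᶜ.card = 10 - I.card := Finset.card_compl I
    have hle : I.card ≤ 10 := Finset.card_le_univ I
    rcases Nat.even_or_odd I.card with hI | hI
    · obtain hlow' | hlow' | h4 | h6 : (I.card = 0 ∨ I.card = 2) ∨ (Iᶜ.card = 0 ∨ Iᶜ.card = 2) ∨
          I.card = 4 ∨ Iᶜ.card = 4 := by grind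
      · exact hlow I hlow'
      · exact walshVector_compl (E := E) I ▸ hlow Iᶜ hlow'
      · rw [walshVector_eq_zero_of_card_eq_four hE h4]
        exact Submodule.zero_mem _
      · rw [← walshVector_compl, walshVector_eq_zero_of_card_eq_four hE h6]
        exact Submodule.zero_mem _
    · rw [walshVector_eq_zero_of_odd_card hI]
      exact Submodule.zero_mem _
  refine Submodule.span_le.2 ?_
  rintro _ ⟨w, rfl⟩
  change ⁅spinVector E w, spinVector E wᶜ⁆ ∈ _
  rw [lie_spinVector_compl_eq_sum_walshVector]
  exact Submodule.smul_mem _ _ (Submodule.sum_mem _ fun I _ => Submodule.smul_mem _ _ (hmem I))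

theorem card_lowMode (I : lowModes) : I.1.card = 0 ∨ I.1.card = 2 :=
  (Finset.mem_filter.1 I.2).2

theorem apply_walshVector {I J : lowModes} {ε : L →ₗ[ℚ] ℚ}
    (hε : ∀ w : Finset (Fin 10), Even w.card → Even wᶜ.card →
      ε ⁅spinVector E w, spinVector E wᶜ⁆ = 2 * (spinSign w * walsh J w)) :
    ε (walshVector E I) = if I = J then 2 ^ 10 else 0 := by
  have hterm (w : Finset (Fin 10)) :
      (walsh I.1 w * spinSign w) * ε ⁅spinVector E w, spinVector E wᶜ⁆ =
      walsh I.1 w * walsh J.1 w + walsh I.1ᶜ w * walsh J.1 w := by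
    have hcompl : walsh I.1ᶜ w = (-1) ^ w.card * walsh I.1 w := by
      rw [walsh_comm, walsh_compl, walsh_comm]
    have hsq : spinSign w * spinSign w = 1 := walsh_mul_self _ w
    rcases Nat.even_or_odd w.card with hw | hw
    · have hwc : Even wᶜ.card := by
        rw [Finset.card_compl, Fintype.card_fin]
        exact Even.tsub (by decide) hw
      rw [hε w hw hwc, hcompl, hw.neg_one_pow]
      linear_combination 2 * walsh I.1 w * walsh J.1 w * hsq
    · rw [lie_spinVector_compl_eq_zero hw, map_zero, hcompl, hw.neg_one_pow]
      ring
  have hne : I.1ᶜ ≠ J.1 := by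
    intro h
    have hcard := Finset.card_compl I.1
    have hI := card_lowMode I
    have hJ := card_lowMode J
    rw [h, Fintype.card_fin] at hcard
    omega
  simp only [walshVector, map_sum, map_smul, smul_eq_mul, hterm, Finset.sum_add_distrib,
    sum_walsh_mul_walsh, hne, if_false, add_zero, Fintype.card_fin, Subtype.ext_iff]

theorem linearIndependent_walshVector (ε : lowModes → L →ₗ[ℚ] ℚ)
    (hε : ∀ J (w : Finset (Fin 10)), Even w.card → Even wᶜ.card →
      ε J ⁅spinVector E w, spinVector E wᶜ⁆ = 2 * (spinSign w * walsh J.1 w)) :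
    LinearIndependent ℚ fun I : lowModes => walshVector E I.1 := by
  rw [Fintype.linearIndependent_iff]
  intro c hc J
  have hJ := congrArg (ε J) hc
  simpa [map_sum, apply_walshVector (hε J)] using hJ

end Relations

section GradedOperators

attribute [local instance] LieRing.ofAssociativeRing LieAlgebra.ofAssociativeAlgebra

variable {R K F D : Type*} [CommRing R] [LieRing K] [LieAlgebra R K] [AddCommGroup F] [Module R F]
  [LieRingModule K F] [LieModule R K F] [AddCommGroup D] [Module R D] [LieRingModule K D]
  [LieModule R K D]

/-- The degree zero operators on `R × F × D`, graded in degrees `0`, `1`, `2`: the action of a Lie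
algebra. -/
def degreeZero : K →ₗ⁅R⁆ Module.End R (R × F × D) where
  toFun x := LinearMap.prodMap 0 ((LieModule.toEnd R K F x).prodMap (LieModule.toEnd R K D x))
  map_add' x y := by ext <;> simp
  map_smul' r x := by ext <;> simp
  map_lie' {x y} := by ext <;> simp [Ring.lie_def]

/-- The degree one operator on `R × F × D` given by `v` in degree `0` and by `ψ` in degree `1`. -/
def degreeOne (v : F) (ψ : F →ₗ[R] D) : Module.End R (R × F × D) where
  toFun m := (0, m.1 • v, ψ m.2.1)
  map_add' m n := by simp [add_smul]
  map_smul' r m := by simp [mul_smul]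

theorem lie_degreeZero_degreeOne (x : K) (v : F) (ψ : F →ₗ[R] D) :
    ⁅(degreeZero x : Module.End R (R × F × D)), degreeOne v ψ⁆ = degreeOne ⁅x, v⁆ ⁅x, ψ⁆ := by
  ext <;> simp [degreeZero, degreeOne, Ring.lie_def]

theorem degreeOne_zero : degreeOne (0 : F) (0 : F →ₗ[R] D) = 0 := by
  ext <;> simp [degreeOne]

theorem lie_degreeOne_eq_zero {v v' : F} {ψ ψ' : F →ₗ[R] D} (h : ψ v' = ψ' v) :
    ⁅degreeOne v ψ, degreeOne v' ψ'⁆ = 0 := by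
  ext <;> simp [degreeOne, Ring.lie_def, h]

/-- The component of degree two of an operator on `R × F × D`, read off by the linear form `ε`. -/
def degreeTwoCoeff (ε : Module.Dual R D) : Module.End R (R × F × D) →ₗ[R] R where
  toFun T := ε (T (1, 0, 0)).2.2
  map_add' S T := by simp
  map_smul' r T := by simp

theorem degreeTwoCoeff_lie_degreeOne (ε : Module.Dual R D) (v v' : F) (ψ ψ' : F →ₗ[R] D) :
    degreeTwoCoeff ε ⁅degreeOne v ψ, degreeOne v' ψ'⁆ = ε (ψ v') - ε (ψ' v) := by
  simp [degreeTwoCoeff, degreeOne, Ring.lie_def]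

section DualAction

variable {P : Type*} [AddCommGroup P] [Module R P] [LieRingModule K P] [LieModule R K P]

/-- The maps from a representation `F` to the dual of a representation `P` by operators on `F`, one
for each linear form `α` on `F`: the value at `f` is `c ↦ α (c f)`. -/
def dualAction (act : P →ₗ⁅R,K⁆ F →ₗ[R] F) : Module.Dual R F →ₗ⁅R,K⁆ F →ₗ[R] Module.Dual R P where
  toFun α := α.compRight R ∘ₗ (act : P →ₗ[R] F →ₗ[R] F).flip
  map_add' α β := by ext; simp
  map_smul' r α := by ext; simp
  map_lie' {x α} := by ext; simp

variable (act : P →ₗ⁅R,K⁆ F →ₗ[R] F)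

theorem lie_degreeZero_degreeOne_dualAction (x : K) (v : F) (α : Module.Dual R F) :
    ⁅(degreeZero x : Module.End R (R × F × Module.Dual R P)), degreeOne v (dualAction act α)⁆ =
      degreeOne ⁅x, v⁆ (dualAction act ⁅x, α⁆) := by
  rw [lie_degreeZero_degreeOne, LieModuleHom.map_lie]

end DualAction

theorem mem_lieStabilizer_pow {A : Type*} [Ring A] [Algebra R A] {N : Submodule R A} {x : A}
    (hx : x ∈ lieStabilizer A N) (n : ℕ) : x ∈ lieStabilizer A (N ^ n) := by
  refine mem_lieStabilizer.2 fun y hy => ?_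
  induction hy using Submodule.pow_induction_on_left' with
  | algebraMap r => simp [Ring.lie_def, Algebra.commutes]
  | add a b n _ _ ha hb =>
    rw [lie_add]
    exact Submodule.add_mem _ ha hb
  | mem_mul m hm n a ha ih =>
    have hleibniz : ⁅x, m * a⁆ = ⁅x, m⁆ * a + m * ⁅x, a⁆ := by
      simp only [Ring.lie_def]
      noncomm_ring
    rw [hleibniz, pow_succ']
    exact Submodule.add_mem _ (Submodule.mul_mem_mul (hx m hm) ha) (Submodule.mul_mem_mul hm ih)

end GradedOperators

section FockOperators

attribute [local instance] LieRing.ofAssociativeRing LieAlgebra.ofAssociativeAlgebra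

variable {ι : Type*} [LinearOrder ι] [LocallyFiniteOrderBot ι]

variable (ι) in
/-- The span of the annihilators, the creators and the identity. Its powers filter the operators
on Fock space by their degree in the creators and the annihilators. -/
def linearOperators : Submodule ℚ (Module.End ℚ (Finset ι →₀ ℚ)) :=
  Submodule.span ℚ (insert 1 (Set.range fun p : Bool × ι => ladder p.1 p.2))

theorem one_mem_linearOperators : 1 ∈ linearOperators ι :=
  Submodule.subset_span (Set.mem_insert _ _)

theorem ladder_mem_linearOperators (b : Bool) (k : ι) : ladder b k ∈ linearOperators ι :=
  Submodule.subset_span (Set.mem_insert_of_mem _ ⟨(b, k), rfl⟩)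

theorem linearOperators_pow_mono : Monotone (linearOperators ι ^ · : ℕ → _) :=
  fun _ _ => pow_le_pow_right' (a := linearOperators ι) (Submodule.one_le.2 one_mem_linearOperators)

theorem chirality_mem_linearOperators_sq (k : ι) :
    chirality annihilator creator k ∈ linearOperators ι ^ 2 := by
  rw [sq, chirality]
  refine Submodule.sub_mem _ ?_ ?_
  · simpa using Submodule.mul_mem_mul (one_mem_linearOperators (ι := ι)) one_mem_linearOperators
  · rw [two_mul]
    have := Submodule.mul_mem_mul (ladder_mem_linearOperators false k)
      (ladder_mem_linearOperators true k)
    exact Submodule.add_mem _ this this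

theorem chirality_prod_mem_linearOperators_pow (l : List ι) :
    (l.map (chirality annihilator creator)).prod ∈ linearOperators ι ^ (2 * l.length) := by
  induction l with
  | nil => simp
  | cons k l ih =>
    rw [List.map_cons, List.prod_cons, List.length_cons, mul_add_one, add_comm]
    exact (pow_add (linearOperators ι) 2 _).ge
      (Submodule.mul_mem_mul (chirality_mem_linearOperators_sq k) ih)

theorem exists_ladder_anticommutator (b b' : Bool) (i j : ι) :
    ∃ s : ℚ, ladder b i * ladder b' j = s • 1 - ladder b' j * ladder b i := by
  by_cases h : i = j → b = b'
  · exact ⟨0, by rw [ladder_mul_ladder h, zero_smul, zero_sub]⟩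
  · push Not at h
    obtain ⟨rfl, hb⟩ := h
    refine ⟨1, ?_⟩
    have hcar := isCAR_annihilator_creator.c_mul_d_self i
    cases b <;> cases b' <;> simp_all

theorem ladder_mul_ladder_mem_lieStabilizer (b b' : Bool) (i j : ι) :
    ladder b i * ladder b' j ∈ lieStabilizer _ (linearOperators ι) := by
  refine mem_lieStabilizer.2 fun y hy => ?_
  induction hy using Submodule.span_induction with
  | mem y hy =>
    rcases hy with rfl | ⟨⟨c, k⟩, rfl⟩
    · simp [Ring.lie_def]
    · obtain ⟨s, hs⟩ := exists_ladder_anticommutator b' c j k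
      obtain ⟨t, ht⟩ := exists_ladder_anticommutator b c i k
      have hlie : ⁅ladder b i * ladder b' j, ladder c k⁆ = s • ladder b i - t • ladder b' j := by
        have hswap : ladder c k * ladder b i = t • 1 - ladder b i * ladder c k := by
          rw [ht, sub_sub_cancel]
        rw [Ring.lie_def, mul_assoc, hs, ← mul_assoc (ladder c k), hswap, mul_sub, sub_mul,
          mul_assoc, mul_smul_one, smul_one_mul]
        abel
      rw [hlie]
      exact Submodule.sub_mem _ (Submodule.smul_mem _ _ (ladder_mem_linearOperators b i))
        (Submodule.smul_mem _ _ (ladder_mem_linearOperators b' j))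
  | zero => simp
  | add x y _ _ hx hy =>
    rw [lie_add]
    exact Submodule.add_mem _ hx hy
  | smul r x _ hx =>
    rw [lie_smul]
    exact Submodule.smul_mem _ _ hx

theorem apply_mem_supported_of_mem_linearOperators {m : ℕ} {c : Module.End ℚ (Finset ι →₀ ℚ)}
    (hc : c ∈ linearOperators ι) {f : Finset ι →₀ ℚ}
    (hf : f ∈ Finsupp.supported ℚ ℚ {w : Finset ι | w.card ≤ m}) :
    c f ∈ Finsupp.supported ℚ ℚ {w : Finset ι | w.card ≤ m + 1} := by
  have hsingle : ∀ (b : Bool) (k : ι) (w : Finset ι), w.card ≤ m → ∀ r : ℚ,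
      ladder b k (Finsupp.single w r) ∈ Finsupp.supported ℚ ℚ {w : Finset ι | w.card ≤ m + 1} := by
    intro b k w hw r
    have hcard : (symmDiff w {k}).card ≤ w.card + 1 :=
      (Finset.card_le_card symmDiff_le_sup).trans (Finset.card_union_le w {k})
    rw [ladder_single]
    split_ifs
    · exact Finsupp.single_mem_supported ℚ _ (hcard.trans (Nat.add_le_add_right hw 1))
    · exact Submodule.zero_mem _
  induction hc using Submodule.span_induction with
  | mem c hc =>
    rcases hc with rfl | ⟨⟨b, k⟩, rfl⟩
    · exact Finsupp.supported_mono (fun w hw => Nat.le_succ_of_le hw) hf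
    · rw [← f.sum_single, map_finsuppSum]
      exact Submodule.sum_mem _ fun w hw => hsingle b k w (hf hw) _
  | zero => exact Submodule.zero_mem _
  | add c c' _ _ hc hc' => exact Submodule.add_mem _ hc hc'
  | smul r c _ hc => exact Submodule.smul_mem _ r hc

theorem apply_mem_supported_of_mem_linearOperators_pow {n m : ℕ}
    {c : Module.End ℚ (Finset ι →₀ ℚ)} (hc : c ∈ linearOperators ι ^ n) {f : Finset ι →₀ ℚ}
    (hf : f ∈ Finsupp.supported ℚ ℚ {w : Finset ι | w.card ≤ m}) :
    c f ∈ Finsupp.supported ℚ ℚ {w : Finset ι | w.card ≤ m + n} := by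
  induction hc using Submodule.pow_induction_on_left' with
  | algebraMap r => exact Submodule.smul_mem _ r hf
  | add c c' n _ _ hc hc' => exact Submodule.add_mem _ hc hc'
  | mem_mul a ha n c _ hc => exact apply_mem_supported_of_mem_linearOperators ha hc

end FockOperators

section Model

attribute [local instance] LieRing.ofAssociativeRing LieAlgebra.ofAssociativeAlgebra

/-- The Lie algebra of operators on Fock space that normalize the operators of degree at most
four in the creators and the annihilators. It contains the operators of degree two. -/
abbrev quarticStabilizer : LieSubalgebra ℚ (Module.End ℚ (Finset (Fin 10) →₀ ℚ)) :=
  lieStabilizer _ (linearOperators (Fin 10) ^ 4)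

/-- The operators on Fock space of degree at most four in the creators and the annihilators. -/
def quarticOperators :
    LieSubmodule ℚ quarticStabilizer ((Finset (Fin 10) →₀ ℚ) →ₗ[ℚ] Finset (Fin 10) →₀ ℚ) :=
  { linearOperators (Fin 10) ^ 4 with
    lie_mem := fun {x} {_} hc => mem_lieStabilizer.1 x.2 _ hc }

theorem raise_spinSystem_mem_quarticStabilizer (j : Fin 10) :
    spinSystem.raise j ∈ quarticStabilizer := by
  refine mem_lieStabilizer_pow ?_ 4
  induction j using Fin.lastCases with
  | last =>
    rw [← Fin.natCast_eq_last]
    exact creator_mul_creator_eq_raise ▸ ladder_mul_ladder_mem_lieStabilizer _ _ _ _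
  | cast j =>
    exact creator_mul_annihilator_eq_raise j ▸ ladder_mul_ladder_mem_lieStabilizer _ _ _ _

/-- The raising operator of a node of `D 10`, acting on Fock space and on the quartic operators. -/
def quarticRaise (j : Fin 10) : quarticStabilizer :=
  ⟨spinSystem.raise j, raise_spinSystem_mem_quarticStabilizer j⟩

theorem serreElement_quarticRaise (i j : Fin 10) :
    serreElement (CartanMatrix.D 10) quarticRaise i j = 0 := by
  have := map_serreElement quarticStabilizer.incl (CartanMatrix.D 10) quarticRaise i j
  exact Subtype.ext (this.trans (spinSystem.serreElement_raise i j))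

/-- The operators of a graded representation of the positive part of `E11`, truncated beyond
degree `2` in the simple root `9`. -/
abbrev ModelEnd : Type :=
  Module.End ℚ (ℚ × (Finset (Fin 10) →₀ ℚ) × Module.Dual ℚ quarticOperators)

/-- The coordinate at `wᶜ` with the sign for which the raising operators act on it as on `w`. -/
def spinCoordinate (w : Finset (Fin 10)) : Module.Dual ℚ (Finset (Fin 10) →₀ ℚ) :=
  spinSign w • Finsupp.lapply wᶜ

/-- The operator by which `spinVector w` acts on the model. -/
def modelVector (w : Finset (Fin 10)) : ModelEnd :=
  degreeOne (Finsupp.single w 1) (dualAction quarticOperators.incl (spinCoordinate w))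

theorem lie_quarticRaise_single (j : Fin 10) (w : Finset (Fin 10)) :
    ⁅quarticRaise j, (Finsupp.single w 1 : Finset (Fin 10) →₀ ℚ)⁆ =
      if spinWeight w j = -1 then Finsupp.single (spinReflect j w) 1 else 0 :=
  raise_spinSystem_single j w 1

theorem lie_quarticRaise_spinCoordinate (j : Fin 10) (w : Finset (Fin 10)) :
    ⁅quarticRaise j, spinCoordinate w⁆ =
      if spinWeight w j = -1 then spinCoordinate (spinReflect j w) else 0 := by
  ext v
  have hrefl : spinReflect j v = wᶜ ↔ v = (spinReflect j w)ᶜ := by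
    rw [← spinReflect_compl, (involutive_spinReflect j).eq_iff]
  have hwt : v = (spinReflect j w)ᶜ → (spinWeight v j = -1 ↔ spinWeight w j = -1) := by
    rintro rfl
    rw [spinWeight_compl, neg_inj, spinWeight_spinReflect_eq_one_iff]
  rw [LinearMap.comp_apply, Finsupp.lsingle_apply, Module.Dual.lie_apply, lie_quarticRaise_single]
  by_cases hv : spinWeight v j = -1 <;> by_cases hw : spinWeight w j = -1 <;>
    simp [spinCoordinate, spinSign_spinReflect, hv, hw, Finsupp.single_apply, hrefl] <;> grind

theorem lie_quarticRaise_modelVector (j : Fin 10) (w : Finset (Fin 10)) :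
    ⁅(degreeZero (quarticRaise j) : ModelEnd), modelVector w⁆ =
      if spinWeight w j = -1 then modelVector (spinReflect j w) else 0 := by
  rw [modelVector, lie_degreeZero_degreeOne_dualAction, lie_quarticRaise_single,
    lie_quarticRaise_spinCoordinate]
  split_ifs
  · rfl
  · rw [map_zero, degreeOne_zero]

theorem dualAction_spinCoordinate_eq_zero {w w' : Finset (Fin 10)} (h : w'.card + 4 < wᶜ.card) :
    dualAction quarticOperators.incl (spinCoordinate w) (Finsupp.single w' 1) = 0 := by
  ext c
  have hsupp := apply_mem_supported_of_mem_linearOperators_pow (c := c.1) c.2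
    (Finsupp.single_mem_supported ℚ 1 (le_refl w'.card))
  have hzero : c.1 (Finsupp.single w' 1) wᶜ = 0 :=
    (Finsupp.mem_supported' ℚ _).1 hsupp wᶜ (not_le.2 h)
  change spinSign w • c.1 (Finsupp.single w' 1) wᶜ = 0
  rw [hzero, smul_zero]

theorem lie_modelVector_empty : ⁅modelVector ∅, modelVector {8, 9}⁆ = 0 :=
  lie_degreeOne_eq_zero <| (dualAction_spinCoordinate_eq_zero (by decide)).trans
    (dualAction_spinCoordinate_eq_zero (by decide)).symm

/-- The operators of the simple root vectors of `E11` on the model. -/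
def modelGenerator : Fin 11 → ModelEnd :=
  Function.extend spinNode (fun j => degreeZero (quarticRaise j)) fun _ => modelVector ∅

theorem modelGenerator_spinNode (j : Fin 10) :
    modelGenerator (spinNode j) = degreeZero (quarticRaise j) :=
  Function.Injective.extend_apply (by decide) _ _ j

theorem modelGenerator_nine : modelGenerator 9 = modelVector ∅ :=
  Function.extend_apply' _ _ _ fun ⟨j, hj⟩ => spinNode_ne_nine j hj

theorem lie_modelGenerator_spinNode_nine (j : Fin 10) :
    ⁅modelGenerator (spinNode j), modelGenerator 9⁆ =
      if j = 9 then modelVector {8, 9} else 0 := by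
  have h89 : spinReflect 9 ∅ = {8, 9} := by decide
  rw [modelGenerator_spinNode, modelGenerator_nine, lie_quarticRaise_modelVector, spinWeight_empty]
  split_ifs <;> simp_all

theorem serreElement_modelGenerator_spinNode (i j : Fin 10) :
    serreElement E11M modelGenerator (spinNode i) (spinNode j) = 0 := by
  have hcomp : modelGenerator ∘ spinNode =
      (degreeZero : quarticStabilizer →ₗ⁅ℚ⁆ ModelEnd) ∘ quarticRaise :=
    funext modelGenerator_spinNode
  change serreElement (E11M.submatrix spinNode spinNode) (modelGenerator ∘ spinNode) i j = 0
  rw [E11M_submatrix_spinNode, hcomp, ← map_serreElement, serreElement_quarticRaise, map_zero]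

theorem serreElement_modelGenerator_spinNode_nine (j : Fin 10) :
    serreElement E11M modelGenerator (spinNode j) 9 = 0 := by
  have hbracket := lie_modelGenerator_spinNode_nine j
  split_ifs at hbracket with hj
  · have hwt : spinWeight {8, 9} 9 ≠ -1 := by decide
    subst hj
    rw [serreElement_of_eq_neg_one (by decide), hbracket, modelGenerator_spinNode,
      lie_quarticRaise_modelVector, if_neg hwt]
  · exact serreElement_eq_zero_of_lie_eq_zero hbracket

theorem serreElement_modelGenerator_nine_spinNode (j : Fin 10) :
    serreElement E11M modelGenerator 9 (spinNode j) = 0 := by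
  have hbracket := lie_modelGenerator_spinNode_nine j
  split_ifs at hbracket with hj
  · subst hj
    rw [serreElement_of_eq_neg_one (by decide), ← lie_skew (modelGenerator 9) (modelGenerator _),
      hbracket, lie_neg, modelGenerator_nine, lie_modelVector_empty, neg_zero]
  · exact serreElement_eq_zero_of_lie_eq_zero (by rw [← lie_skew, hbracket, neg_zero])

theorem serreElement_modelGenerator (i j : Fin 11) : serreElement E11M modelGenerator i j = 0 := by
  rcases eq_or_ne i 9 with rfl | hi <;> rcases eq_or_ne j 9 with rfl | hj
  · exact serreElement_self isGCM_E11M.1 _ 9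
  · obtain ⟨j, rfl⟩ := exists_spinNode_eq hj
    exact serreElement_modelGenerator_nine_spinNode j
  · obtain ⟨i, rfl⟩ := exists_spinNode_eq hi
    exact serreElement_modelGenerator_spinNode_nine i
  · obtain ⟨i, rfl⟩ := exists_spinNode_eq hi
    obtain ⟨j, rfl⟩ := exists_spinNode_eq hj
    exact serreElement_modelGenerator_spinNode i j

end Model

section LowerBound

attribute [local instance] LieRing.ofAssociativeRing LieAlgebra.ofAssociativeAlgebra

theorem spinVector_modelGenerator {w : Finset (Fin 10)} (hw : Even w.card) :
    spinVector modelGenerator w = modelVector w := by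
  refine spinVector_induction (p := fun w m => Even w.card → m = modelVector w)
    (fun _ => modelGenerator_nine) (by simp) (fun w j hwt ih hcard => ?_) w hw
  have heven : Even w.card := by
    rwa [← Nat.not_odd_iff_even, odd_card_spinReflect, Nat.not_odd_iff_even] at hcard
  rw [ih heven, modelGenerator_spinNode, lie_quarticRaise_modelVector, if_pos hwt]

theorem chirality_prod_mem_quarticOperators {l : List (Fin 10)} (hl : l.length ≤ 2) :
    (l.map (chirality annihilator creator)).prod ∈ quarticOperators :=
  linearOperators_pow_mono (by omega : 2 * l.length ≤ 4)
    (chirality_prod_mem_linearOperators_pow l)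

/-- The linear form that reads off the coefficient of degree two of an operator on the model at the
product of the chirality operators of the modes in `I`. -/
def chiralityCoeff (I : lowModes) : ModelEnd →ₗ[ℚ] ℚ :=
  degreeTwoCoeff (Module.Dual.eval ℚ _
    ⟨_, chirality_prod_mem_quarticOperators (l := I.1.toList) <| by
      have := card_lowMode I
      rw [Finset.length_toList]
      omega⟩)

theorem chiralityCoeff_lie_modelVector_compl (I : lowModes) (w : Finset (Fin 10)) :
    chiralityCoeff I ⁅modelVector w, modelVector wᶜ⁆ = 2 * (spinSign w * walsh I w) := by
  have hcoord (v v' : Finset (Fin 10)) : spinCoordinate v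
      ((I.1.toList.map (chirality annihilator creator)).prod (Finsupp.single v' 1)) =
      if v' = vᶜ then spinSign v * walsh I v' else 0 := by
    simp [spinCoordinate, chirality_prod_single I.1.nodup_toList, Finsupp.single_apply]
  have heven : Even I.1.card := by
    rcases card_lowMode I with h | h <;> rw [h] <;> decide
  refine (degreeTwoCoeff_lie_degreeOne _ _ _ _ _).trans
    ((congrArg₂ _ (hcoord w wᶜ) (hcoord wᶜ w)).trans ?_)
  rw [if_pos rfl, if_pos (compl_compl w).symm, walsh_compl, heven.neg_one_pow, spinSign_compl]
  ring

theorem linearIndependent_walshVector_modelGenerator :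
    LinearIndependent ℚ fun I : lowModes => walshVector modelGenerator I.1 := by
  refine linearIndependent_walshVector chiralityCoeff fun I w hw hwc => ?_
  rw [spinVector_modelGenerator hw, spinVector_modelGenerator hwc,
    chiralityCoeff_lie_modelVector_compl]

theorem linearIndependent_walshVector_gE :
    LinearIndependent ℚ fun I : lowModes => walshVector (gE E11M) I.1 := by
  rw [Fintype.linearIndependent_iff]
  intro c hc
  refine Fintype.linearIndependent_iff.1 linearIndependent_walshVector_modelGenerator c ?_
  have hlift {L : Type} [LieRing L] [LieAlgebra ℚ L] (E : Fin 11 → L) :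
      FreeLieAlgebra.lift ℚ E (∑ I : lowModes, c I • walshVector (FreeLieAlgebra.of ℚ) I.1) =
        ∑ I : lowModes, c I • walshVector E I.1 := by
    simp [map_walshVector, FreeLieAlgebra.of_comp_lift]
  rw [← hlift]
  exact lift_eq_zero_of_lift_gE_eq_zero isGCM_E11M serreElement_modelGenerator
    ((hlift (gE E11M)).trans hc)

end LowerBound

theorem rootMult_firstNonaffineRoot : rootMult E11M firstNonaffineRoot = 46 := by
  have hspan : rootSpace E11M firstNonaffineRoot =
      Submodule.span ℚ (Set.range fun I : lowModes => walshVector (gE E11M) I.1) := by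
    refine le_antisymm (rootSpace_firstNonaffineRoot_le.trans
      (span_lie_spinVector_compl_le (serreElement_gE E11M))) (Submodule.span_le.2 ?_)
    rintro _ ⟨I, rfl⟩
    exact Submodule.sum_mem _ fun w _ => Submodule.smul_mem _ _ (lie_spinVector_mem_rootSpace w)
  rw [rootMult, hspan, finrank_span_eq_card linearIndependent_walshVector_gE, Fintype.card_coe,
    card_lowModes]

/-- **Multiplicity of the first non-affine root of `E11`.** For
`β = (1,2,3,4,5,6,7,8,5,2,4)` one has `βᵀ A(E11) β = -2` and `mult β = 46`. -/
theorem e11_first_nonaffine_root_mult :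
    (∑ i, ∑ j, ![1,2,3,4,5,6,7,8,5,2,4] i * E11M i j * ![1,2,3,4,5,6,7,8,5,2,4] j
      = (-2 : ℤ)) ∧
    rootMult E11M ![1,2,3,4,5,6,7,8,5,2,4] = 46 :=
  ⟨by decide, rootMult_firstNonaffineRoot⟩
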